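/- Assume the Example setup (so Assumption 2.1 holds with a_n = n/μ(E_n) and P_n = μ(· ∩ E_n)/μ(E_n)), let h = (h^{(k)})_{k≥0} ∈ H, and suppose there exists n_0 ≥ 1 such that h^{(k)} vanishes outside E_{n_0}^k for every k ≥ 1. Define γ_n(k,k) := 𝔼[(I_k^{(n)}(h^{(k)}))²]. Then there exists a constant C > 0 such that for every integer K ≥ 1 and every n ≥ max(n_0, K), sup_{1 ≤ k ≤ K} | γ_n(k,k) − k! ‖h̃^{(k)}‖²_{L²(μ^k)} | ≤ C^K K^{2K} (a_n/n)^{1/2} + C^K K^{(3/2)K} n^{−1/2}. -/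

import Mathlib

open MeasureTheory ProbabilityTheory Filter Topology
open scoped ENNReal NNReal

/-- The positive (`true`) and negative (`false`) parts of the signed measure `√a · W_n`. -/
noncomputable def mixMeasure {E : Type*} [MeasurableSpace E] (P : Measure E) (n : ℕ)
    (X : Fin n → E) : Bool → Measure E
  | true => ∑ j : Fin n, Measure.dirac (X j)
  | false => (n : ℝ≥0) • P

/-- The multiple empirical integral `I_k^{(n)}(f)` for one realization `X` of the sample:
the integral of `f` over the off-diagonal set with respect to the `k`-fold product of the
signed measure `W_n = a^{-1/2} (Σ_j δ_{X_j} − n P)`, expanded multilinearly into its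
positive and negative parts. -/
noncomputable def empInt {E : Type*} [MeasurableSpace E] (P : Measure E)
    (n : ℕ) (a : ℝ) (X : Fin n → E) (k : ℕ) (f : (Fin k → E) → ℝ) : ℝ :=
  (Real.sqrt a)⁻¹ ^ k *
    ∑ ε : Fin k → Bool,
      (-1 : ℝ) ^ (Finset.univ.filter fun i => ε i = false).card *
        ∫ u in {u : Fin k → E | Function.Injective u}, f u
          ∂(Measure.pi fun i => mixMeasure P n X (ε i))

/-- The symmetrization `f̃` of a function of `k` variables. -/
noncomputable def symmetrize {E : Type*} (k : ℕ) (f : (Fin k → E) → ℝ) :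
    (Fin k → E) → ℝ :=
  fun u => (k.factorial : ℝ)⁻¹ * ∑ σ : Equiv.Perm (Fin k), f (u ∘ σ)

/-!
Off the diagonal, `I_k^{(n)}(f)` is a signed sum over the ways of filling some of the `k` slots by
distinct sample points and the remaining ones by the compensator `n P`. Adding the sample points
one at a time gives a recursion for the product moment of two such integrals. Its solution is a sum
over `q` of the `q`-fold contractions of the two kernels; for two kernels of order `k` on `n` points
the coefficient is `q! C(k,q)² n(n-1)⋯(n-q+1)` times the monic Charlier polynomial of mean `n` and
degree `2(k-q)`, evaluated at `n - q`.

The term `q = k` gives `k! ‖f̃‖²` up to a relative error `k² / n`. For `q < k` the Charlier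
polynomial, being evaluated near its mean, is only of order `n ^ (k-q)`, while by Cauchy–Schwarz a
kernel supported in `A ^ k` has `q`-fold contraction at most `P(A) ^ (k-q) ‖f̃‖²`. The sum of these
terms is thus of relative order `P(A)`, and for `A = E_{n₀}` this is a multiple of `a_n / n`.
-/

section Charlier

variable {c : ℝ}

/-- The monic Charlier polynomials in `x`, orthogonal for the Poisson law of mean `c`, indexed by
their degree and defined by their three-term recurrence. -/
def charlier (c x : ℝ) : ℕ → ℝ
  | 0 => 1
  | 1 => x - c
  | e + 2 => (x - c - (e + 1)) * charlier c x (e + 1) - c * (e + 1) * charlier c x e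

lemma charlier_zero_arg (c : ℝ) (e : ℕ) : charlier c 0 e = (-c) ^ e := by
  induction e using Nat.twoStepInduction with
  | zero => simp [charlier]
  | one => simp [charlier]
  | more e ih ih' =>
    rw [charlier, ih, ih']
    ring

lemma charlier_add_one_succ (c x : ℝ) (e : ℕ) :
    charlier c (x + 1) (e + 1) = charlier c x (e + 1) + (e + 1) * charlier c x e := by
  induction e using Nat.twoStepInduction with
  | zero => norm_num [charlier]; ring
  | one => norm_num [charlier]; ring
  | more e ih ih' =>
    have h₁ : charlier c (x + 1) (e + 3) = (x + 1 - c - (e + 2)) * charlier c (x + 1) (e + 2)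
        - c * (e + 2) * charlier c (x + 1) (e + 1) := by
      rw [charlier]; push_cast; ring
    have h₂ : charlier c x (e + 3) = (x - c - (e + 2)) * charlier c x (e + 2)
        - c * (e + 2) * charlier c x (e + 1) := by
      rw [charlier]; push_cast; ring
    have h₃ : charlier c x (e + 2) = (x - c - (e + 1)) * charlier c x (e + 1)
        - c * (e + 1) * charlier c x e := by
      rw [charlier]
    push_cast at ih' ⊢
    rw [h₁, h₂, ih', ih]
    linear_combination -((e : ℝ) + 2) * h₃

lemma charlier_add_one (c x : ℝ) (e : ℕ) :
    charlier c (x + 1) e = charlier c x e + e * charlier c x (e - 1) := by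
  cases e with
  | zero => simp [charlier]
  | succ e => simpa using charlier_add_one_succ c x e

lemma abs_charlier_sub_le (hc : 1 ≤ c) {q M : ℝ} (hq : 0 ≤ q) (hM : 1 ≤ M) (e : ℕ)
    (he : q + e ≤ M) : |charlier c (c - q) e| ≤ (2 * M * √c) ^ e := by
  have hs : 1 ≤ √c := Real.one_le_sqrt.mpr hc
  have hss : √c * √c = c := Real.mul_self_sqrt (by linarith)
  induction e using Nat.twoStepInduction with
  | zero => simp [charlier]
  | one =>
    have hqM : q ≤ M := by push_cast at he; linarith
    rw [charlier, pow_one, sub_right_comm, sub_self, zero_sub, abs_neg, abs_of_nonneg hq]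
    nlinarith [hqM]
  | more e ih ih' =>
    push_cast at he ih'
    set B := 2 * M * √c
    have hrec : charlier c (c - q) (e + 2)
        = -((q + (e + 1)) * charlier c (c - q) (e + 1) + c * (e + 1) * charlier c (c - q) e) := by
      rw [charlier]; ring
    calc |charlier c (c - q) (e + 2)|
        ≤ (q + (e + 1)) * |charlier c (c - q) (e + 1)| + c * (e + 1) * |charlier c (c - q) e| := by
          rw [hrec, abs_neg]
          refine (abs_add_le _ _).trans_eq ?_
          rw [abs_mul, abs_mul, abs_of_nonneg (by positivity : 0 ≤ q + (e + 1)),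
            abs_of_nonneg (by positivity : 0 ≤ c * (e + 1))]
      _ ≤ M * B ^ (e + 1) + c * M * B ^ e := by
          gcongr
          · linarith
          · exact ih' (by linarith)
          · linarith
          · exact ih (by linarith)
      _ = (2 * M ^ 2 * √c + c * M) * B ^ e := by simp only [B]; ring
      _ ≤ (4 * M ^ 2 * c) * B ^ e := by
          gcongr
          nlinarith [mul_nonneg (sq_nonneg M) (mul_nonneg (sub_nonneg.2 hs) (Real.sqrt_nonneg c)),
            mul_nonneg (mul_nonneg (by linarith : 0 ≤ c) (by linarith : 0 ≤ M)) (sub_nonneg.2 hM)]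
      _ = B ^ (e + 2) := by
          simp only [B]
          linear_combination (-4 * M ^ 2 * (2 * M * √c) ^ e) * hss

/-- The coefficient of the `q`-fold contraction of kernels of orders `k` and `k'` in the product
moment of their (unnormalised) empirical integrals over `m` sample points; `c` is the mass of the
compensator. -/
noncomputable def contractionCoeff (c : ℝ) (m k k' q : ℕ) : ℝ :=
  (q.factorial * k.choose q * k'.choose q * m.descFactorial q : ℕ)
    * charlier c (m - q) (k + k' - 2 * q)

lemma contractionCoeff_eq_zero_of_left_lt (c : ℝ) (m : ℕ) {k q : ℕ} (k' : ℕ) (h : k < q) :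
    contractionCoeff c m k k' q = 0 := by
  simp [contractionCoeff, Nat.choose_eq_zero_of_lt h]

lemma contractionCoeff_eq_zero_of_right_lt (c : ℝ) (m k : ℕ) {k' q : ℕ} (h : k' < q) :
    contractionCoeff c m k k' q = 0 := by
  simp [contractionCoeff, Nat.choose_eq_zero_of_lt h]

lemma contractionCoeff_eq_zero_of_sample_lt (c : ℝ) {m q : ℕ} (k k' : ℕ) (h : m < q) :
    contractionCoeff c m k k' q = 0 := by
  simp [contractionCoeff, Nat.descFactorial_eq_zero_iff_lt.mpr h]

lemma contractionCoeff_zero (c : ℝ) (m k k' : ℕ) :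
    contractionCoeff c m k k' 0 = charlier c m (k + k') := by
  simp [contractionCoeff]

lemma contractionCoeff_succ_sample_zero (c : ℝ) (m k k' : ℕ) :
    contractionCoeff c (m + 1) (k + 1) (k' + 1) 0
      = contractionCoeff c m (k + 1) (k' + 1) 0 + (k + 1) * contractionCoeff c m k (k' + 1) 0
        + (k' + 1) * contractionCoeff c m (k + 1) k' 0 := by
  simp only [contractionCoeff_zero]
  rw [show k + 1 + (k' + 1) = k + k' + 1 + 1 by ring, show k + (k' + 1) = k + k' + 1 by ring,
    show k + 1 + k' = k + k' + 1 by ring, Nat.cast_succ m, charlier_add_one_succ]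
  push_cast
  ring

lemma cast_succ_mul_choose_succ (k q : ℕ) :
    ((k : ℝ) + 1) * k.choose (q + 1) = (k - q) * (k + 1).choose (q + 1) := by
  rcases le_or_gt q k with h | h
  · have := congrArg (Nat.cast : ℕ → ℝ) (Nat.choose_mul_succ_eq k (q + 1))
    rw [Nat.add_sub_add_right] at this
    push_cast [Nat.cast_sub h] at this
    linarith
  · simp [Nat.choose_eq_zero_of_lt (by omega : k < q + 1),
      Nat.choose_eq_zero_of_lt (by omega : k + 1 < q + 1)]

lemma cast_succ_descFactorial_succ (m q : ℕ) :
    ((m + 1).descFactorial (q + 1) : ℝ)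
      = m.descFactorial (q + 1) + (q + 1) * m.descFactorial q := by
  rw [Nat.succ_descFactorial_succ, Nat.descFactorial_succ]
  rcases le_or_gt q m with h | h
  · push_cast [Nat.cast_sub h]
    ring
  · simp [Nat.descFactorial_eq_zero_iff_lt.mpr h]

lemma contractionCoeff_succ_sample_succ (c : ℝ) (m k k' q : ℕ) :
    contractionCoeff c (m + 1) (k + 1) (k' + 1) (q + 1)
      = contractionCoeff c m (k + 1) (k' + 1) (q + 1)
        + (k + 1) * contractionCoeff c m k (k' + 1) (q + 1)
        + (k' + 1) * contractionCoeff c m (k + 1) k' (q + 1)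
        + (k + 1) * (k' + 1) * contractionCoeff c m k k' q := by
  by_cases hk : k < q
  · simp only [contractionCoeff_eq_zero_of_left_lt _ _ _ (by omega : k < q + 1),
      contractionCoeff_eq_zero_of_left_lt _ _ _ (by omega : k + 1 < q + 1),
      contractionCoeff_eq_zero_of_left_lt _ _ _ hk, mul_zero, add_zero]
  by_cases hk' : k' < q
  · simp only [contractionCoeff_eq_zero_of_right_lt _ _ _ (by omega : k' < q + 1),
      contractionCoeff_eq_zero_of_right_lt _ _ _ (by omega : k' + 1 < q + 1),
      contractionCoeff_eq_zero_of_right_lt _ _ _ hk', mul_zero, add_zero]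
  obtain ⟨r, rfl⟩ := Nat.exists_eq_add_of_le (not_lt.mp hk)
  obtain ⟨r', rfl⟩ := Nat.exists_eq_add_of_le (not_lt.mp hk')
  have hdiff := charlier_add_one c (m - (q + 1)) (r + r')
  rw [show (m : ℝ) - (q + 1) + 1 = m - q by ring] at hdiff
  have hchoose := cast_succ_mul_choose_succ (q + r) q
  have hchoose' := cast_succ_mul_choose_succ (q + r') q
  have hdesc := cast_succ_descFactorial_succ m q
  have hmul := congrArg (Nat.cast : ℕ → ℝ) (Nat.add_one_mul_choose_eq (q + r) q)
  have hmul' := congrArg (Nat.cast : ℕ → ℝ) (Nat.add_one_mul_choose_eq (q + r') q)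
  simp only [contractionCoeff, Nat.factorial_succ]
  rw [show q + r + 1 + (q + r' + 1) - 2 * (q + 1) = r + r' by omega,
    show q + r + (q + r' + 1) - 2 * (q + 1) = r + r' - 1 by omega,
    show q + r + 1 + (q + r') - 2 * (q + 1) = r + r' - 1 by omega,
    show q + r + (q + r') - 2 * q = r + r' by omega]
  push_cast at *
  rw [hdesc, add_sub_add_right_eq_sub]
  set C := ((q + r + 1).choose (q + 1) : ℝ)
  set C' := ((q + r' + 1).choose (q + 1) : ℝ)
  set φ := charlier c (m - (q + 1)) (r + r' - 1)
  set ψ := charlier c (m - q) (r + r')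
  set A := (q.factorial : ℝ)
  set D := (m.descFactorial (q + 1) : ℝ)
  linear_combination (q + 1) * A * C * C' * D * hdiff - (q + 1) * A * C' * D * φ * hchoose
    - (q + 1) * A * C * D * φ * hchoose'
    - A * m.descFactorial q * ψ * ((q + r' + 1) * (q + r').choose q * hmul + C * (q + 1) * hmul')

end Charlier

section BoundedMeasurable

variable {α β : Type*} [MeasurableSpace α] [MeasurableSpace β]

/-- Bounded measurable real functions: the class on which every moment identity is proved before
being extended to `L²` by truncation. -/
def BoundedMeasurable (f : α → ℝ) : Prop :=
  Measurable f ∧ ∃ B : ℝ, ∀ a, |f a| ≤ B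

namespace BoundedMeasurable

lemma const (c : ℝ) : BoundedMeasurable fun _ : α => c :=
  ⟨measurable_const, |c|, fun _ => le_rfl⟩

lemma integrable {f : α → ℝ} (hf : BoundedMeasurable f) (ν : Measure α) [IsFiniteMeasure ν] :
    Integrable f ν := by
  obtain ⟨hmeas, B, hB⟩ := hf
  exact Integrable.of_bound hmeas.aestronglyMeasurable B (ae_of_all _ hB)

lemma memLp {f : α → ℝ} (hf : BoundedMeasurable f) (p : ℝ≥0∞) (ν : Measure α)
    [IsFiniteMeasure ν] : MemLp f p ν := by
  obtain ⟨hmeas, B, hB⟩ := hf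
  exact MemLp.of_bound hmeas.aestronglyMeasurable B (ae_of_all _ hB)

lemma add {f g : α → ℝ} (hf : BoundedMeasurable f) (hg : BoundedMeasurable g) :
    BoundedMeasurable fun a => f a + g a := by
  obtain ⟨hfm, B, hB⟩ := hf
  obtain ⟨hgm, B', hB'⟩ := hg
  exact ⟨hfm.add hgm, B + B', fun a => (abs_add_le _ _).trans (add_le_add (hB a) (hB' a))⟩

lemma mul {f g : α → ℝ} (hf : BoundedMeasurable f) (hg : BoundedMeasurable g) :
    BoundedMeasurable fun a => f a * g a := by
  obtain ⟨hfm, B, hB⟩ := hf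
  obtain ⟨hgm, B', hB'⟩ := hg
  refine ⟨hfm.mul hgm, B * B', fun a => ?_⟩
  rw [abs_mul]
  exact mul_le_mul (hB a) (hB' a) (abs_nonneg _) ((abs_nonneg _).trans (hB a))

lemma const_mul {f : α → ℝ} (hf : BoundedMeasurable f) (c : ℝ) :
    BoundedMeasurable fun a => c * f a :=
  (const c).mul hf

lemma sum {ι : Type*} {f : ι → α → ℝ} (S : Finset ι) (hf : ∀ i ∈ S, BoundedMeasurable (f i)) :
    BoundedMeasurable fun a => ∑ i ∈ S, f i a := by
  choose! hmeas B hB using hf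
  exact ⟨Finset.measurable_fun_sum S hmeas, ∑ i ∈ S, B i, fun a =>
    (Finset.abs_sum_le_sum_abs _ _).trans (Finset.sum_le_sum fun i hi => hB i hi a)⟩

lemma comp {f : α → ℝ} (hf : BoundedMeasurable f) {g : β → α} (hg : Measurable g) :
    BoundedMeasurable fun b => f (g b) :=
  ⟨hf.1.comp hg, hf.2.imp fun _ h _ => h _⟩

lemma integral {f : α × β → ℝ} (hf : BoundedMeasurable f) (ν : Measure β)
    [IsProbabilityMeasure ν] : BoundedMeasurable fun a => ∫ b, f (a, b) ∂ν := by
  obtain ⟨hmeas, B, hB⟩ := hf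
  refine ⟨hmeas.stronglyMeasurable.integral_prod_right'.measurable, B, fun a => ?_⟩
  simpa using norm_integral_le_of_norm_le_const (μ := ν) (f := fun b => f (a, b))
    (ae_of_all _ fun b => hB (a, b))

end BoundedMeasurable

end BoundedMeasurable

section FirstCoordinate

variable {α E : Type*} {k : ℕ}

/-- The kernel of order `k` obtained from one of order `k + 1` by fixing its first argument. -/
def fixFirst (y : E) (f : (Fin (k + 1) → E) → ℝ) : (Fin k → E) → ℝ :=
  fun u => f (Fin.cons y u)

/-- The kernel of order `k` obtained from one of order `k + 1` by integrating out its first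
argument. -/
noncomputable def averageFirst [MeasurableSpace E] (P : Measure E) (f : (Fin (k + 1) → E) → ℝ) :
    (Fin k → E) → ℝ :=
  fun u => ∫ y, fixFirst y f u ∂P

/-- Symmetric kernels: invariant under permutations of the arguments. -/
def IsPermInvariant (f : (Fin k → E) → ℝ) : Prop :=
  ∀ (σ : Equiv.Perm (Fin k)) (u : Fin k → E), f (u ∘ σ) = f u

lemma finCons_comp_perm (σ : Equiv.Perm (Fin k)) (y : E) (u : Fin k → E) :
    (Fin.cons y (u ∘ σ) : Fin (k + 1) → E)
      = (Fin.cons y u : Fin (k + 1) → E) ∘ Equiv.Perm.decomposeFin.symm (0, σ) := by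
  funext i
  refine Fin.cases ?_ (fun i => ?_) i
  · simp
  · simp [Equiv.Perm.decomposeFin_symm_apply_succ]

lemma finCons_finCons_swap (y z : E) (u : Fin k → E) :
    (Fin.cons y (Fin.cons z u : Fin (k + 1) → E) : Fin (k + 2) → E)
      = (Fin.cons z (Fin.cons y u : Fin (k + 1) → E) : Fin (k + 2) → E) ∘ Equiv.swap 0 1 := by
  funext i
  refine Fin.cases (by simp) (fun i => Fin.cases (by simp) (fun i => ?_) i) i
  have hfix : Equiv.swap (0 : Fin (k + 2)) 1 i.succ.succ = i.succ.succ :=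
    Equiv.swap_apply_of_ne_of_ne (Fin.succ_ne_zero _)
      (by rw [← Fin.succ_zero_eq_one]; exact (Fin.succ_injective _).ne (Fin.succ_ne_zero _))
  simp [hfix]

namespace IsPermInvariant

lemma fixFirst {f : (Fin (k + 1) → E) → ℝ} (hf : IsPermInvariant f) (y : E) :
    IsPermInvariant (fixFirst y f) := fun σ u => by
  rw [_root_.fixFirst, finCons_comp_perm, hf, _root_.fixFirst]

lemma averageFirst [MeasurableSpace E] (P : Measure E) {f : (Fin (k + 1) → E) → ℝ}
    (hf : IsPermInvariant f) : IsPermInvariant (averageFirst P f) := fun σ u => by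
  simp only [_root_.averageFirst, hf.fixFirst _ σ u]

lemma fixFirst_comm {f : (Fin (k + 2) → E) → ℝ} (hf : IsPermInvariant f) (y z : E) :
    _root_.fixFirst y (_root_.fixFirst z f) = _root_.fixFirst z (_root_.fixFirst y f) := by
  funext u
  simp only [_root_.fixFirst]
  rw [finCons_finCons_swap, hf]

lemma fixFirst_averageFirst [MeasurableSpace E] (P : Measure E) {f : (Fin (k + 2) → E) → ℝ}
    (hf : IsPermInvariant f) (y : E) :
    _root_.fixFirst y (_root_.averageFirst P f) = _root_.averageFirst P (_root_.fixFirst y f) := by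
  funext u
  refine integral_congr_ae (ae_of_all _ fun z => ?_)
  exact congrFun (hf.fixFirst_comm y z) u

end IsPermInvariant

variable [MeasurableSpace α] [MeasurableSpace E] {P : Measure E} [IsProbabilityMeasure P]

@[fun_prop]
lemma measurable_finCons {y : α → E} {u : α → Fin k → E} (hy : Measurable y) (hu : Measurable u) :
    Measurable fun a => (Fin.cons (y a) (u a) : Fin (k + 1) → E) :=
  measurable_pi_iff.mpr (Fin.cases (by simpa using hy) fun i => by
    simpa using measurable_pi_iff.mp hu i)

namespace BoundedMeasurable

lemma fixFirst_param {F : α → (Fin (k + 1) → E) → ℝ}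
    (hF : BoundedMeasurable fun p : α × (Fin (k + 1) → E) => F p.1 p.2) {y : α → E}
    (hy : Measurable y) :
    BoundedMeasurable fun p : α × (Fin k → E) => fixFirst (y p.1) (F p.1) p.2 :=
  hF.comp (g := fun p : α × (Fin k → E) => (p.1, (Fin.cons (y p.1) p.2 : Fin (k + 1) → E)))
    (by fun_prop)

lemma fixFirst_prod {f : (Fin (k + 1) → E) → ℝ} (hf : BoundedMeasurable f) :
    BoundedMeasurable fun p : E × (Fin k → E) => fixFirst p.1 f p.2 :=
  fixFirst_param (F := fun _ => f) (hf.comp measurable_snd) measurable_id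

lemma integral_fixFirst (ν : Measure (Fin k → E)) [IsProbabilityMeasure ν]
    {f : (Fin (k + 1) → E) → ℝ} (hf : BoundedMeasurable f) :
    BoundedMeasurable fun y => ∫ u, _root_.fixFirst y f u ∂ν :=
  hf.fixFirst_prod.integral ν

lemma fixFirst {f : (Fin (k + 1) → E) → ℝ} (hf : BoundedMeasurable f) (y : E) :
    BoundedMeasurable (fixFirst y f) :=
  hf.comp (g := fun u => (Fin.cons y u : Fin (k + 1) → E)) (by fun_prop)

lemma averageFirst {f : (Fin (k + 1) → E) → ℝ} (hf : BoundedMeasurable f) :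
    BoundedMeasurable (averageFirst P f) :=
  (hf.comp (g := fun p : (Fin k → E) × E => (Fin.cons p.2 p.1 : Fin (k + 1) → E))
    (by fun_prop)).integral P

end BoundedMeasurable

lemma map_finCons_prod_pi (ν : Fin (k + 1) → Measure E) [∀ i, SigmaFinite (ν i)] :
    ((ν 0).prod (Measure.pi fun i => ν (Fin.succ i))).map
      (fun p => (Fin.cons p.1 p.2 : Fin (k + 1) → E)) = Measure.pi ν := by
  rw [← (measurePreserving_piFinSuccAbove ν 0).symm.map_eq]
  congr 1
  funext p
  exact (Fin.insertNth_zero' p.1 p.2).symm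

lemma integral_pi_eq_integral_fixFirst (ν : Fin (k + 1) → Measure E)
    [∀ i, IsProbabilityMeasure (ν i)] {f : (Fin (k + 1) → E) → ℝ} (hf : BoundedMeasurable f) :
    ∫ u, f u ∂Measure.pi ν = ∫ y, ∫ u, fixFirst y f u ∂Measure.pi (fun i => ν i.succ) ∂ν 0 := by
  have hcons : Measurable fun p : E × (Fin k → E) => (Fin.cons p.1 p.2 : Fin (k + 1) → E) := by
    fun_prop
  rw [← map_finCons_prod_pi, integral_map hcons.aemeasurable hf.1.aestronglyMeasurable,
    integral_prod _ ((hf.comp hcons).integrable _)]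
  rfl

lemma integral_pi_eq_integral_averageFirst (ν : Fin (k + 1) → Measure E)
    [∀ i, IsProbabilityMeasure (ν i)] {f : (Fin (k + 1) → E) → ℝ} (hf : BoundedMeasurable f) :
    ∫ u, f u ∂Measure.pi ν = ∫ u, averageFirst (ν 0) f u ∂Measure.pi fun i => ν i.succ := by
  rw [integral_pi_eq_integral_fixFirst ν hf]
  exact integral_integral_swap ((hf.comp (g := fun p : E × (Fin k → E) =>
    (Fin.cons p.1 p.2 : Fin (k + 1) → E)) (by fun_prop)).integrable _)

lemma integral_pi_fin_zero (ν : Fin 0 → Measure E) (f : (Fin 0 → E) → ℝ) :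
    ∫ u, f u ∂Measure.pi ν = f Fin.elim0 := by
  rw [Measure.pi_of_empty ν Fin.elim0, integral_dirac]

end FirstCoordinate

section PartialInjection

variable {ι κ E : Type*} {k : ℕ}

/-- `j : κ → Option ι` is an injection into `S` where it is defined. Such `j` index the terms of a
multiple empirical integral: slot `i` is filled with the sample point `l` if `j i = some l`, and
with the compensator if `j i = none`. -/
def IsPartialInjection (S : Finset ι) (j : κ → Option ι) : Prop :=
  (∀ i, ∀ l ∈ j i, l ∈ S) ∧ ∀ i i', ∀ l ∈ j i, l ∈ j i' → i = i'

/-- The family filling slot `i` with the sample point `x l` if `j i = some l`, and with the fresh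
point `v i` if `j i = none`. -/
def mergeSample (j : κ → Option ι) (x : ι → E) (v : κ → E) : κ → E :=
  fun i => (j i).elim (v i) x

lemma isPartialInjection_cons_none {S : Finset ι} {j : Fin k → Option ι} :
    IsPartialInjection S (Fin.cons none j : Fin (k + 1) → Option ι) ↔ IsPartialInjection S j := by
  simp [IsPartialInjection, Fin.forall_fin_succ]

lemma isPartialInjection_cons_some [DecidableEq ι] {S : Finset ι} {l : ι} {j : Fin k → Option ι} :
    IsPartialInjection S (Fin.cons (some l) j : Fin (k + 1) → Option ι)
      ↔ l ∈ S ∧ IsPartialInjection (S.erase l) j := by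
  simp only [IsPartialInjection, Fin.forall_fin_succ, Fin.cons_zero, Fin.cons_succ,
    Option.mem_some_iff, Finset.mem_erase]
  grind

lemma mergeSample_cons_none (j : Fin k → Option ι) (x : ι → E) (y : E) (v : Fin k → E) :
    mergeSample (Fin.cons none j : Fin (k + 1) → Option ι) x (Fin.cons y v : Fin (k + 1) → E)
      = Fin.cons y (mergeSample j x v) :=
  funext (Fin.cases (by simp [mergeSample]) (by simp [mergeSample]))

lemma mergeSample_cons_some (l : ι) (j : Fin k → Option ι) (x : ι → E) (y : E) (v : Fin k → E) :
    mergeSample (Fin.cons (some l) j : Fin (k + 1) → Option ι) x (Fin.cons y v : Fin (k + 1) → E)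
      = Fin.cons (x l) (mergeSample j x v) :=
  funext (Fin.cases (by simp [mergeSample]) (by simp [mergeSample]))

lemma IsPartialInjection.mergeSample_congr {S : Finset ι} {j : κ → Option ι}
    (hj : IsPartialInjection S j) {x x' : ι → E} (hx : ∀ l ∈ S, x l = x' l) (v : κ → E) :
    mergeSample j x v = mergeSample j x' v := by
  funext i
  cases hi : j i with
  | none => simp [mergeSample, hi]
  | some l => simp [mergeSample, hi, hx l (hj.1 i l hi)]

lemma isPartialInjection_of_injective_mergeSample [Fintype ι] {j : κ → Option ι} {x : ι → E}
    {v : κ → E} (h : Function.Injective (mergeSample j x v)) :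
    IsPartialInjection Finset.univ j :=
  ⟨by simp, fun i i' l (hi : j i = some l) (hi' : j i' = some l) =>
    h (by simp [mergeSample, hi, hi'])⟩

variable {α : Type*} [MeasurableSpace α] [MeasurableSpace E]

@[fun_prop]
lemma measurable_mergeSample (j : κ → Option ι) {x : α → ι → E} {v : α → κ → E}
    (hx : Measurable x) (hv : Measurable v) : Measurable fun a => mergeSample j (x a) (v a) := by
  refine measurable_pi_iff.mpr fun i => ?_
  cases hi : j i with
  | none => simpa [mergeSample, hi] using measurable_pi_iff.mp hv i
  | some l => simpa [mergeSample, hi] using measurable_pi_iff.mp hx l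

lemma measurePreserving_comp_injective {τ : Type*} [Fintype κ] [Fintype τ] (P : Measure E)
    [IsProbabilityMeasure P] {g : κ → τ} (hg : Function.Injective g) :
    MeasurePreserving (fun z : τ → E => z ∘ g) (Measure.pi fun _ => P) (Measure.pi fun _ => P) := by
  refine ⟨by fun_prop, ?_⟩
  have hindep : iIndepFun (fun (i : κ) (z : τ → E) => z (g i)) (Measure.pi fun _ => P) :=
    (iIndepFun_pi (X := fun _ : τ => id) (fun _ => aemeasurable_id)).precomp hg
  refine ((iIndepFun_iff_map_fun_eq_pi_map fun i =>
    (measurable_pi_apply (g i)).aemeasurable).mp hindep).trans ?_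
  congr 1 with i : 1
  exact (measurePreserving_eval (fun _ : τ => P) (g i)).map_eq

lemma IsPartialInjection.measurePreserving_mergeSample [Fintype ι] [Fintype κ] (P : Measure E)
    [IsProbabilityMeasure P] {S : Finset ι} {j : κ → Option ι} (hj : IsPartialInjection S j) :
    MeasurePreserving (fun p : (ι → E) × (κ → E) => mergeSample j p.1 p.2)
      ((Measure.pi fun _ => P).prod (Measure.pi fun _ => P)) (Measure.pi fun _ => P) := by
  let g : κ → ι ⊕ κ := fun i => (j i).elim (Sum.inr i) Sum.inl
  have hg : Function.Injective g := fun i i' h => by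
    cases hi : j i <;> cases hi' : j i' <;> simp only [g, hi, hi', Option.elim] at h
    · exact Sum.inr_injective h
    · cases h
    · cases h
    · exact hj.2 i i' _ hi (Sum.inl_injective h ▸ hi')
  have hmerge := (measurePreserving_comp_injective P hg).comp
    (measurePreserving_sumPiEquivProdPi_symm fun _ : ι ⊕ κ => P)
  convert hmerge using 1
  funext p i
  cases hi : j i <;> simp [mergeSample, g, hi, MeasurableEquiv.sumPiEquivProdPi]

lemma measurePreserving_update [Fintype ι] [DecidableEq ι] (P : Measure E)
    [IsProbabilityMeasure P] (l : ι) :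
    MeasurePreserving (fun p : E × (ι → E) => Function.update p.2 l p.1)
      (P.prod (Measure.pi fun _ => P)) (Measure.pi fun _ => P) := by
  have hmeas : Measurable fun p : E × (ι → E) => Function.update p.2 l p.1 :=
    measurable_update'.comp measurable_swap
  refine ⟨hmeas, (Measure.pi_eq fun s hs => ?_).symm⟩
  have hpre : (fun p : E × (ι → E) => Function.update p.2 l p.1) ⁻¹' Set.univ.pi s
      = s l ×ˢ Set.pi (Finset.univ.erase l) s := by
    ext p
    rw [Set.mem_preimage, Set.update_mem_pi_iff]
    simp [Set.mem_pi, and_comm]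
  rw [Measure.map_apply hmeas (MeasurableSet.univ_pi hs), hpre, Measure.prod_prod,
    Measure.pi_pi_finset, Finset.mul_prod_erase _ (fun i => P (s i)) (Finset.mem_univ l)]

end PartialInjection

section EmpiricalIntegral

variable {ι E : Type*} {k : ℕ}

/-- The product over the slots of the masses `1` (sample point) and `-c` (compensator). -/
def slotWeight (c : ℝ) (j : Fin k → Option ι) : ℝ :=
  ∏ i, (j i).elim (-c) fun _ => 1

lemma abs_slotWeight (c : ℝ) (j : Fin k → Option ι) : |slotWeight c j| = slotWeight (-|c|) j := by
  rw [slotWeight, Finset.abs_prod, slotWeight]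
  refine Finset.prod_congr rfl fun i _ => ?_
  cases j i <;> simp

variable [MeasurableSpace E] {P : Measure E} {c : ℝ}

lemma integral_mergeSample_cons_none [IsProbabilityMeasure P] (x : ι → E) (j : Fin k → Option ι)
    {f : (Fin (k + 1) → E) → ℝ} (hf : BoundedMeasurable f) :
    ∫ v, f (mergeSample (Fin.cons none j : Fin (k + 1) → Option ι) x v) ∂Measure.pi (fun _ => P)
      = ∫ v, averageFirst P f (mergeSample j x v) ∂Measure.pi fun _ => P := by
  rw [integral_pi_eq_integral_averageFirst _ (hf.comp (by fun_prop))]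
  simp only [averageFirst, fixFirst, mergeSample_cons_none]

lemma integral_mergeSample_cons_some [IsProbabilityMeasure P] (x : ι → E) (l : ι)
    (j : Fin k → Option ι) {f : (Fin (k + 1) → E) → ℝ} (hf : BoundedMeasurable f) :
    ∫ v, f (mergeSample (Fin.cons (some l) j : Fin (k + 1) → Option ι) x v)
        ∂Measure.pi (fun _ => P)
      = ∫ v, fixFirst (x l) f (mergeSample j x v) ∂Measure.pi fun _ => P := by
  rw [integral_pi_eq_integral_fixFirst _ (hf.comp (by fun_prop))]
  simp [fixFirst, mergeSample_cons_some]

variable [Fintype ι]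

open Classical in
/-- The unnormalised multiple empirical integral over the sample points `x l`, `l ∈ S`: the
integral of `f` with respect to the `k`-fold product of `∑ l ∈ S, δ_{x l} - c P`, the terms in which
a sample point is used twice being left out. -/
noncomputable def empiricalIntegral (P : Measure E) (c : ℝ) (x : ι → E) (S : Finset ι)
    (f : (Fin k → E) → ℝ) : ℝ :=
  ∑ j : Fin k → Option ι with IsPartialInjection S j,
    slotWeight c j * ∫ v, f (mergeSample j x v) ∂Measure.pi fun _ => P

lemma empiricalIntegral_congr {x x' : ι → E} {S : Finset ι} (h : ∀ l ∈ S, x l = x' l)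
    (f : (Fin k → E) → ℝ) : empiricalIntegral P c x S f = empiricalIntegral P c x' S f := by
  classical
  refine Finset.sum_congr rfl fun j hj => ?_
  simp only [(Finset.mem_filter.mp hj).2.mergeSample_congr h]

lemma empiricalIntegral_order_zero (x : ι → E) (S : Finset ι) (f : (Fin 0 → E) → ℝ) :
    empiricalIntegral P c x S f = f Fin.elim0 := by
  have hinj : ∀ j : Fin 0 → Option ι, IsPartialInjection S j := fun _ =>
    ⟨fun i => i.elim0, fun i => i.elim0⟩
  simp only [empiricalIntegral, hinj, integral_pi_fin_zero, Finset.filter_true, slotWeight]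
  simp [Subsingleton.elim _ (Fin.elim0 : Fin 0 → E)]

variable [IsProbabilityMeasure P]

lemma empiricalIntegral_succ [DecidableEq ι] (x : ι → E) (S : Finset ι)
    {f : (Fin (k + 1) → E) → ℝ} (hf : BoundedMeasurable f) :
    empiricalIntegral P c x S f
      = ∑ l ∈ S, empiricalIntegral P c x (S.erase l) (fixFirst (x l) f)
        - c * empiricalIntegral P c x S (averageFirst P f) := by
  classical
  simp only [empiricalIntegral, Finset.sum_filter]
  rw [← (Fin.consEquiv fun _ : Fin (k + 1) => Option ι).sum_comp, Fintype.sum_prod_type,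
    Fintype.sum_option, add_comm, sub_eq_add_neg, ← neg_mul]
  simp only [Fin.consEquiv, Equiv.coe_fn_mk, isPartialInjection_cons_none,
    isPartialInjection_cons_some, integral_mergeSample_cons_none x _ hf,
    integral_mergeSample_cons_some x _ _ hf, slotWeight, Fin.prod_univ_succ, Fin.cons_zero,
    Fin.cons_succ, Option.elim, one_mul, ite_and, Finset.mul_sum, mul_ite, mul_zero, mul_assoc]
  congr 1
  rw [← Finset.sum_subset (Finset.subset_univ S) fun l _ hl => by simp [hl]]
  exact Finset.sum_congr rfl fun l hl => by simp [hl]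

lemma empiricalIntegral_insert [DecidableEq ι] (x : ι → E) {S : Finset ι} {l : ι} (hl : l ∉ S)
    {f : (Fin (k + 1) → E) → ℝ} (hf : BoundedMeasurable f) (hsymm : IsPermInvariant f) :
    empiricalIntegral P c x (insert l S) f
      = empiricalIntegral P c x S f + (k + 1) * empiricalIntegral P c x S (fixFirst (x l) f) := by
  induction k generalizing S with
  | zero =>
    rw [empiricalIntegral_succ _ _ hf, empiricalIntegral_succ _ _ hf, Finset.sum_insert hl]
    simp only [empiricalIntegral_order_zero]
    push_cast
    ring
  | succ k ih =>
    have herase : ∀ l' ∈ S, empiricalIntegral P c x ((insert l S).erase l') (fixFirst (x l') f)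
        = empiricalIntegral P c x (S.erase l') (fixFirst (x l') f) + (k + 1) *
          empiricalIntegral P c x (S.erase l') (fixFirst (x l') (fixFirst (x l) f)) := by
      intro l' hl'
      rw [Finset.erase_insert_of_ne (ne_of_mem_of_not_mem hl' hl).symm,
        ih (mt Finset.mem_of_mem_erase hl) (hf.fixFirst _) (hsymm.fixFirst _),
        hsymm.fixFirst_comm]
    rw [empiricalIntegral_succ _ _ hf, Finset.sum_insert hl, Finset.erase_insert hl,
      Finset.sum_congr rfl herase, ih hl hf.averageFirst (hsymm.averageFirst P),
      hsymm.fixFirst_averageFirst, Finset.sum_add_distrib, ← Finset.mul_sum,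
      empiricalIntegral_succ _ S hf]
    have hslice := empiricalIntegral_succ (P := P) (c := c) x S (hf.fixFirst (x l))
    push_cast
    linear_combination (-((k : ℝ) + 1)) * hslice

lemma empiricalIntegral_insert_update [DecidableEq ι] (x : ι → E) {S : Finset ι} {l : ι}
    (hl : l ∉ S) (y : E) {f : (Fin (k + 1) → E) → ℝ} (hf : BoundedMeasurable f)
    (hsymm : IsPermInvariant f) :
    empiricalIntegral P c (Function.update x l y) (insert l S) f
      = empiricalIntegral P c x S f + (k + 1) * empiricalIntegral P c x S (fixFirst y f) := by
  have hupdate : ∀ l' ∈ S, Function.update x l y l' = x l' := fun l' hl' =>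
    Function.update_of_ne (ne_of_mem_of_not_mem hl' hl) y x
  rw [empiricalIntegral_insert _ hl hf hsymm, Function.update_self,
    empiricalIntegral_congr hupdate, empiricalIntegral_congr hupdate]

lemma empiricalIntegral_empty (x : ι → E) {f : (Fin k → E) → ℝ} (hf : BoundedMeasurable f) :
    empiricalIntegral P c x ∅ f = (-c) ^ k * ∫ u, f u ∂Measure.pi fun _ => P := by
  classical
  induction k with
  | zero => simp [empiricalIntegral_order_zero, integral_pi_fin_zero]
  | succ k ih =>
    rw [empiricalIntegral_succ _ _ hf, Finset.sum_empty, ih hf.averageFirst,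
      integral_pi_eq_integral_averageFirst _ hf]
    ring

lemma BoundedMeasurable.empiricalIntegral_param {α : Type*} [MeasurableSpace α] {x : α → ι → E}
    (hx : Measurable x) (S : Finset ι) {F : α → (Fin k → E) → ℝ}
    (hF : BoundedMeasurable fun p : α × (Fin k → E) => F p.1 p.2) :
    BoundedMeasurable fun a => empiricalIntegral P c (x a) S (F a) :=
  BoundedMeasurable.sum _ fun j _ => BoundedMeasurable.const_mul
    ((hF.comp (g := fun p : α × (Fin k → E) => (p.1, mergeSample j (x p.1) p.2))
      (by fun_prop)).integral _) _

lemma BoundedMeasurable.empiricalIntegral (S : Finset ι) {f : (Fin k → E) → ℝ}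
    (hf : BoundedMeasurable f) :
    BoundedMeasurable fun x : ι → E => empiricalIntegral P c x S f :=
  BoundedMeasurable.empiricalIntegral_param measurable_id S (hf.comp measurable_snd)

lemma integral_pi_eq_integral_update [DecidableEq ι] (l : ι) {φ : (ι → E) → ℝ}
    (hφ : BoundedMeasurable φ) :
    ∫ x, φ x ∂(Measure.pi fun _ => P)
      = ∫ y, ∫ x, φ (Function.update x l y) ∂(Measure.pi fun _ => P) ∂P := by
  have hupdate := measurePreserving_update P l
  conv_lhs => rw [← hupdate.map_eq]
  rw [integral_map hupdate.measurable.aemeasurable hφ.1.aestronglyMeasurable,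
    integral_prod _ ((hφ.comp hupdate.measurable).integrable _)]

lemma integral_empiricalIntegral (S : Finset ι) {f : (Fin k → E) → ℝ} (hf : BoundedMeasurable f)
    (hsymm : IsPermInvariant f) :
    ∫ x, empiricalIntegral P c x S f ∂(Measure.pi fun _ => P)
      = charlier c S.card k * ∫ u, f u ∂Measure.pi fun _ => P := by
  classical
  induction S using Finset.induction_on generalizing k with
  | empty => simp [empiricalIntegral_empty _ hf, charlier_zero_arg]
  | insert l S hl ih =>
    cases k with
    | zero => simp [empiricalIntegral_order_zero, charlier, integral_pi_fin_zero]
    | succ k =>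
      have hslice : ∀ y, ∫ x, empiricalIntegral P c (Function.update x l y) (insert l S) f
            ∂(Measure.pi fun _ => P)
          = charlier c S.card (k + 1) * ∫ u, f u ∂(Measure.pi fun _ => P)
            + (k + 1) * (charlier c S.card k * ∫ u, fixFirst y f u ∂Measure.pi fun _ => P) := by
        intro y
        simp only [empiricalIntegral_insert_update _ hl y hf hsymm]
        rw [integral_add ((hf.empiricalIntegral S).integrable _)
          ((((hf.fixFirst y).empiricalIntegral S).const_mul _).integrable _), integral_const_mul,
          ih hf hsymm, ih (hf.fixFirst y) (hsymm.fixFirst y)]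
      rw [integral_pi_eq_integral_update l (hf.empiricalIntegral _)]
      simp only [hslice]
      rw [integral_add (integrable_const _)
          ((((hf.integral_fixFirst _).const_mul _).const_mul _).integrable _),
        integral_const, integral_const_mul, integral_const_mul,
        ← integral_pi_eq_integral_fixFirst (fun _ => P) hf, probReal_univ,
        Finset.card_insert_of_notMem hl, Nat.cast_succ, charlier_add_one_succ, one_smul]
      ring

end EmpiricalIntegral

section Contraction

universe u

variable {α E : Type u} [MeasurableSpace α] [MeasurableSpace E] {k k' : ℕ}

/-- The `q`-fold contraction of the kernels `f` and `g`: their first `q` arguments are identified,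
and all arguments are then integrated out with respect to `P`. It is `0` when one of the kernels has
fewer than `q` arguments. -/
noncomputable def contraction (P : Measure E) :
    (q : ℕ) → {k k' : ℕ} → ((Fin k → E) → ℝ) → ((Fin k' → E) → ℝ) → ℝ
  | 0, _, _, f, g => (∫ u, f u ∂Measure.pi fun _ => P) * ∫ u, g u ∂Measure.pi fun _ => P
  | q + 1, _ + 1, _ + 1, f, g => ∫ y, contraction P q (fixFirst y f) (fixFirst y g) ∂P
  | _ + 1, 0, _, _, _ => 0
  | _ + 1, _ + 1, 0, _, _ => 0

lemma contraction_comm (P : Measure E) (q : ℕ) (f : (Fin k → E) → ℝ) (g : (Fin k' → E) → ℝ) :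
    contraction P q f g = contraction P q g f := by
  induction q generalizing k k' with
  | zero => simp only [contraction, mul_comm]
  | succ q ih =>
    cases k <;> cases k' <;> simp only [contraction, ih]

variable {P : Measure E} [IsProbabilityMeasure P]

lemma BoundedMeasurable.contraction_param (q : ℕ) {F : α → (Fin k → E) → ℝ}
    {G : α → (Fin k' → E) → ℝ} (hF : BoundedMeasurable fun p : α × (Fin k → E) => F p.1 p.2)
    (hG : BoundedMeasurable fun p : α × (Fin k' → E) => G p.1 p.2) :
    BoundedMeasurable fun a => contraction P q (F a) (G a) := by
  induction q generalizing α k k' with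
  | zero =>
    simp only [contraction]
    exact (hF.integral _).mul (hG.integral _)
  | succ q ih =>
    cases k <;> cases k' <;> simp only [contraction]
    case succ.succ k k' =>
      have hslice : ∀ {m : ℕ} {H : α → (Fin (m + 1) → E) → ℝ},
          (BoundedMeasurable fun p : α × (Fin (m + 1) → E) => H p.1 p.2) →
          BoundedMeasurable fun p : (α × E) × (Fin m → E) => _root_.fixFirst p.1.2 (H p.1.1) p.2 :=
        fun {_ H} hH => fixFirst_param (F := fun p : α × E => H p.1)
          (hH.comp (measurable_fst.fst.prodMk measurable_snd)) measurable_snd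
      exact (ih (F := fun p : α × E => _root_.fixFirst p.2 (F p.1))
        (G := fun p : α × E => _root_.fixFirst p.2 (G p.1)) (hslice hF) (hslice hG)).integral P
    all_goals exact const 0

lemma integral_contraction_fixFirst_left {q : ℕ} (hq : q ≤ k) {f : (Fin (k + 1) → E) → ℝ}
    {g : (Fin k' → E) → ℝ} (hf : BoundedMeasurable f) (hg : BoundedMeasurable g)
    (hsymm : IsPermInvariant f) :
    ∫ y, contraction P q (fixFirst y f) g ∂P = contraction P q f g := by
  induction q generalizing k k' with
  | zero =>
    simp only [contraction]
    rw [integral_mul_const, ← integral_pi_eq_integral_fixFirst (fun _ => P) hf]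
  | succ q ih =>
    obtain ⟨k, rfl⟩ := Nat.exists_eq_add_of_le' (Nat.one_le_of_lt hq)
    cases k' with
    | zero => simp [contraction]
    | succ k' =>
      simp only [contraction]
      have hfubini : Integrable (fun p : E × E =>
          contraction P q (fixFirst p.2 (fixFirst p.1 f)) (fixFirst p.2 g)) (P.prod P) :=
        (BoundedMeasurable.contraction_param q
          (BoundedMeasurable.fixFirst_param (F := fun p : E × E => fixFirst p.1 f)
            (BoundedMeasurable.fixFirst_param (F := fun _ => f) (hf.comp measurable_snd)
              measurable_fst) measurable_snd)
          (BoundedMeasurable.fixFirst_param (F := fun _ => g) (hg.comp measurable_snd)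
            measurable_snd)).integrable _
      rw [integral_integral_swap hfubini]
      refine integral_congr_ae (ae_of_all _ fun z => ?_)
      simp only [hsymm.fixFirst_comm z]
      exact ih (by omega) (hf.fixFirst z) (hg.fixFirst z) (hsymm.fixFirst z)

lemma integral_contraction_fixFirst_right {q : ℕ} (hq : q ≤ k') {f : (Fin k → E) → ℝ}
    {g : (Fin (k' + 1) → E) → ℝ} (hf : BoundedMeasurable f) (hg : BoundedMeasurable g)
    (hsymm : IsPermInvariant g) :
    ∫ y, contraction P q f (fixFirst y g) ∂P = contraction P q f g := by
  simp only [contraction_comm P q f]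
  exact integral_contraction_fixFirst_left hq hg hf hsymm

end Contraction

section ProductMoment

universe u

variable {ι : Type*} {E : Type u} {k k' : ℕ} [MeasurableSpace E] [Fintype ι]

/-- The expectation, for an i.i.d. sample of law `P`, of the product of the multiple empirical
integrals of `f` and `g` over the sample points indexed by `S`. -/
noncomputable def productMoment (P : Measure E) (c : ℝ) (S : Finset ι) (f : (Fin k → E) → ℝ)
    (g : (Fin k' → E) → ℝ) : ℝ :=
  ∫ x, empiricalIntegral P c x S f * empiricalIntegral P c x S g ∂Measure.pi fun _ => P

variable {P : Measure E} {c : ℝ} {S : Finset ι}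
  {f : (Fin k → E) → ℝ} {g : (Fin k' → E) → ℝ}

lemma productMoment_comm (f : (Fin k → E) → ℝ) (g : (Fin k' → E) → ℝ) :
    productMoment P c S f g = productMoment P c S g f := by
  simp only [productMoment, mul_comm]

lemma sum_contractionCoeff_mul_of_eq_zero {m N : ℕ} (hN : 0 < N) (h : m = 0 ∨ k = 0 ∨ k' = 0)
    (B : ℕ → ℝ) : ∑ q ∈ Finset.range N, contractionCoeff c m k k' q * B q
      = contractionCoeff c m k k' 0 * B 0 :=
  Finset.sum_eq_single_of_mem 0 (Finset.mem_range.mpr hN) fun q _ hq => by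
    have hq : 0 < q := Nat.pos_of_ne_zero hq
    rcases h with rfl | rfl | rfl
    · rw [contractionCoeff_eq_zero_of_sample_lt c k k' hq, zero_mul]
    · rw [contractionCoeff_eq_zero_of_left_lt c m k' hq, zero_mul]
    · rw [contractionCoeff_eq_zero_of_right_lt c m k hq, zero_mul]

lemma sum_contractionCoeff_succ_sample (m N : ℕ) (B : ℕ → ℝ) :
    ∑ q ∈ Finset.range (N + 1), contractionCoeff c (m + 1) (k + 1) (k' + 1) q * B q
      = ∑ q ∈ Finset.range (N + 1), contractionCoeff c m (k + 1) (k' + 1) q * B q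
        + (k + 1) * ∑ q ∈ Finset.range (N + 1), contractionCoeff c m k (k' + 1) q * B q
        + (k' + 1) * ∑ q ∈ Finset.range (N + 1), contractionCoeff c m (k + 1) k' q * B q
        + (k + 1) * (k' + 1) * ∑ q ∈ Finset.range N, contractionCoeff c m k k' q * B (q + 1) := by
  have hsucc : ∀ q, contractionCoeff c (m + 1) (k + 1) (k' + 1) (q + 1) * B (q + 1)
      = contractionCoeff c m (k + 1) (k' + 1) (q + 1) * B (q + 1)
        + (k + 1) * (contractionCoeff c m k (k' + 1) (q + 1) * B (q + 1))
        + (k' + 1) * (contractionCoeff c m (k + 1) k' (q + 1) * B (q + 1))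
        + (k + 1) * (k' + 1) * (contractionCoeff c m k k' q * B (q + 1)) := fun q => by
    rw [contractionCoeff_succ_sample_succ]
    ring
  simp only [Finset.sum_range_succ' _ N, hsucc, Finset.sum_add_distrib, ← Finset.mul_sum,
    contractionCoeff_succ_sample_zero]
  ring

variable [IsProbabilityMeasure P]

lemma BoundedMeasurable.productMoment_param {F : E → (Fin k → E) → ℝ} {G : E → (Fin k' → E) → ℝ}
    (hF : BoundedMeasurable fun p : E × (Fin k → E) => F p.1 p.2)
    (hG : BoundedMeasurable fun p : E × (Fin k' → E) => G p.1 p.2) :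
    BoundedMeasurable fun y => productMoment P c S (F y) (G y) :=
  ((empiricalIntegral_param (F := fun p : E × (ι → E) => F p.1) measurable_snd S
      (hF.comp (measurable_fst.fst.prodMk measurable_snd))).mul
    (empiricalIntegral_param (F := fun p : E × (ι → E) => G p.1) measurable_snd S
      (hG.comp (measurable_fst.fst.prodMk measurable_snd)))).integral _

lemma integral_mul_empiricalIntegral_insert_update [DecidableEq ι] {l : ι} (hl : l ∉ S) (y : E)
    {f : (Fin (k + 1) → E) → ℝ} {g : (Fin (k' + 1) → E) → ℝ} (hf : BoundedMeasurable f)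
    (hg : BoundedMeasurable g) (hfs : IsPermInvariant f) (hgs : IsPermInvariant g) :
    ∫ x, empiricalIntegral P c (Function.update x l y) (insert l S) f
        * empiricalIntegral P c (Function.update x l y) (insert l S) g ∂(Measure.pi fun _ => P)
      = productMoment P c S f g + (k + 1) * productMoment P c S (fixFirst y f) g
        + (k' + 1) * productMoment P c S f (fixFirst y g)
        + (k + 1) * (k' + 1) * productMoment P c S (fixFirst y f) (fixFirst y g) := by
  have hint : ∀ {m m' : ℕ} {F : (Fin m → E) → ℝ} {G : (Fin m' → E) → ℝ}, BoundedMeasurable F →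
      BoundedMeasurable G → Integrable (fun x => empiricalIntegral P c x S F
        * empiricalIntegral P c x S G) (Measure.pi fun _ => P) := fun hF hG =>
    ((hF.empiricalIntegral S).mul (hG.empiricalIntegral S)).integrable _
  have h₁ := (hint (hf.fixFirst y) hg).const_mul ((k : ℝ) + 1)
  have h₂ := (hint hf (hg.fixFirst y)).const_mul ((k' : ℝ) + 1)
  have h₃ := (hint (hf.fixFirst y) (hg.fixFirst y)).const_mul (((k : ℝ) + 1) * (k' + 1))
  simp only [productMoment, ← integral_const_mul]
  rw [← integral_add (hint hf hg) h₁, ← integral_add ((hint hf hg).fun_add h₁) h₂,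
    ← integral_add (((hint hf hg).fun_add h₁).fun_add h₂) h₃]
  refine integral_congr_ae (ae_of_all _ fun x => ?_)
  simp only [empiricalIntegral_insert_update x hl y hf hfs,
    empiricalIntegral_insert_update x hl y hg hgs]
  ring

lemma productMoment_insert [DecidableEq ι] {l : ι} (hl : l ∉ S) {f : (Fin (k + 1) → E) → ℝ}
    {g : (Fin (k' + 1) → E) → ℝ} (hf : BoundedMeasurable f) (hg : BoundedMeasurable g)
    (hfs : IsPermInvariant f) (hgs : IsPermInvariant g) :
    productMoment P c (insert l S) f g = productMoment P c S f g
      + (k + 1) * ∫ y, productMoment P c S (fixFirst y f) g ∂P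
      + (k' + 1) * ∫ y, productMoment P c S f (fixFirst y g) ∂P
      + (k + 1) * (k' + 1) * ∫ y, productMoment P c S (fixFirst y f) (fixFirst y g) ∂P := by
  have hint : ∀ {m m' : ℕ} {F : E → (Fin m → E) → ℝ} {G : E → (Fin m' → E) → ℝ} (b : ℝ),
      (BoundedMeasurable fun p : E × (Fin m → E) => F p.1 p.2) →
      (BoundedMeasurable fun p : E × (Fin m' → E) => G p.1 p.2) →
      Integrable (fun y => b * productMoment P c S (F y) (G y)) P := fun b hF hG =>
    ((BoundedMeasurable.productMoment_param hF hG).integrable P).const_mul b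
  have h₀ := integrable_const (μ := P) (productMoment P c S f g)
  have h₁ := hint (k + 1) (F := fun y => fixFirst y f) hf.fixFirst_prod (G := fun _ => g)
    (hg.comp measurable_snd)
  have h₂ := hint (k' + 1) (F := fun _ => f) (hf.comp measurable_snd) (G := fun y => fixFirst y g)
    hg.fixFirst_prod
  have h₃ := hint ((k + 1) * (k' + 1)) (F := fun y => fixFirst y f) hf.fixFirst_prod
    (G := fun y => fixFirst y g) hg.fixFirst_prod
  rw [productMoment, integral_pi_eq_integral_update l
    ((hf.empiricalIntegral _).mul (hg.empiricalIntegral _))]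
  simp only [integral_mul_empiricalIntegral_insert_update hl _ hf hg hfs hgs]
  rw [integral_add ((h₀.fun_add h₁).fun_add h₂) h₃, integral_add (h₀.fun_add h₁) h₂,
    integral_add h₀ h₁, integral_const, probReal_univ, one_smul, integral_const_mul,
    integral_const_mul, integral_const_mul]

lemma productMoment_order_zero_left {f : (Fin 0 → E) → ℝ} (hg : BoundedMeasurable g)
    (hgs : IsPermInvariant g) :
    productMoment P c S f g = contractionCoeff c S.card 0 k' 0 * contraction P 0 f g := by
  simp only [productMoment, empiricalIntegral_order_zero, integral_const_mul, contraction,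
    integral_empiricalIntegral S hg hgs, integral_pi_fin_zero, contractionCoeff_zero, zero_add]
  ring

lemma integral_sum_contraction_fixFirst_left (m N : ℕ) {f : (Fin (k + 1) → E) → ℝ}
    (hf : BoundedMeasurable f) (hg : BoundedMeasurable g) (hfs : IsPermInvariant f) :
    ∫ y, ∑ q ∈ Finset.range N, contractionCoeff c m k k' q * contraction P q (fixFirst y f) g ∂P
      = ∑ q ∈ Finset.range N, contractionCoeff c m k k' q * contraction P q f g := by
  rw [integral_finsetSum _ fun q _ => ((BoundedMeasurable.contraction_param q
    (F := fun y => fixFirst y f) hf.fixFirst_prod (G := fun _ => g)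
    (hg.comp measurable_snd)).integrable P).const_mul _]
  refine Finset.sum_congr rfl fun q _ => ?_
  rcases le_or_gt q k with hq | hq
  · rw [integral_const_mul, integral_contraction_fixFirst_left hq hf hg hfs]
  · simp [contractionCoeff_eq_zero_of_left_lt c m k' hq]

lemma integral_sum_contraction_fixFirst_right (m N : ℕ) {g : (Fin (k' + 1) → E) → ℝ}
    (hf : BoundedMeasurable f) (hg : BoundedMeasurable g) (hgs : IsPermInvariant g) :
    ∫ y, ∑ q ∈ Finset.range N, contractionCoeff c m k k' q * contraction P q f (fixFirst y g) ∂P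
      = ∑ q ∈ Finset.range N, contractionCoeff c m k k' q * contraction P q f g := by
  rw [integral_finsetSum _ fun q _ => ((BoundedMeasurable.contraction_param q
    (F := fun _ => f) (hf.comp measurable_snd) (G := fun y => fixFirst y g)
    hg.fixFirst_prod).integrable P).const_mul _]
  refine Finset.sum_congr rfl fun q _ => ?_
  rcases le_or_gt q k' with hq | hq
  · rw [integral_const_mul, integral_contraction_fixFirst_right hq hf hg hgs]
  · simp [contractionCoeff_eq_zero_of_right_lt c m k hq]

lemma integral_sum_contraction_fixFirst_fixFirst (m N : ℕ) {f : (Fin (k + 1) → E) → ℝ}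
    {g : (Fin (k' + 1) → E) → ℝ} (hf : BoundedMeasurable f) (hg : BoundedMeasurable g) :
    ∫ y, ∑ q ∈ Finset.range N, contractionCoeff c m k k' q
        * contraction P q (fixFirst y f) (fixFirst y g) ∂P
      = ∑ q ∈ Finset.range N, contractionCoeff c m k k' q * contraction P (q + 1) f g := by
  rw [integral_finsetSum _ fun q _ => ((BoundedMeasurable.contraction_param q
    (F := fun y => fixFirst y f) hf.fixFirst_prod (G := fun y => fixFirst y g)
    hg.fixFirst_prod).integrable P).const_mul _]
  simp only [integral_const_mul, contraction]

lemma productMoment_empty (hf : BoundedMeasurable f) (hg : BoundedMeasurable g) :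
    productMoment P c (∅ : Finset ι) f g = contractionCoeff c 0 k k' 0 * contraction P 0 f g := by
  simp only [productMoment, empiricalIntegral_empty _ hf, empiricalIntegral_empty _ hg,
    integral_const, probReal_univ, one_smul, contraction, contractionCoeff_zero, Nat.cast_zero,
    charlier_zero_arg]
  ring

theorem productMoment_eq_sum_contraction (S : Finset ι) {N : ℕ} (hN : k < N)
    (hf : BoundedMeasurable f) (hg : BoundedMeasurable g) (hfs : IsPermInvariant f)
    (hgs : IsPermInvariant g) :
    productMoment P c S f g
      = ∑ q ∈ Finset.range N, contractionCoeff c S.card k k' q * contraction P q f g := by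
  classical
  induction S using Finset.induction_on generalizing k k' N with
  | empty =>
    rw [Finset.card_empty, sum_contractionCoeff_mul_of_eq_zero (by omega) (.inl rfl),
      productMoment_empty hf hg]
  | insert l S hl ih =>
    rcases k with _ | k
    · rw [sum_contractionCoeff_mul_of_eq_zero hN (.inr (.inl rfl)),
        productMoment_order_zero_left hg hgs]
    rcases k' with _ | k'
    · rw [sum_contractionCoeff_mul_of_eq_zero (by omega) (.inr (.inr rfl)),
        productMoment_comm, productMoment_order_zero_left hf hfs, contraction_comm,
        contractionCoeff_zero, contractionCoeff_zero, add_comm]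
    obtain ⟨N, rfl⟩ := Nat.exists_eq_add_of_le' (Nat.one_le_of_lt hN)
    rw [productMoment_insert hl hf hg hfs hgs, Finset.card_insert_of_notMem hl,
      sum_contractionCoeff_succ_sample, ih hN hf hg hfs hgs,
      ← integral_sum_contraction_fixFirst_left _ _ hf hg hfs,
      ← integral_sum_contraction_fixFirst_right _ _ hf hg hgs,
      ← integral_sum_contraction_fixFirst_fixFirst _ _ hf hg]
    simp only [ih (Nat.lt_of_succ_lt hN) (hf.fixFirst _) hg (hfs.fixFirst _) hgs,
      ih hN hf (hg.fixFirst _) hfs (hgs.fixFirst _),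
      ih (Nat.lt_of_succ_lt_succ hN) (hf.fixFirst _) (hg.fixFirst _) (hfs.fixFirst _)
        (hgs.fixFirst _)]

end ProductMoment

section SecondMomentBound

universe u

variable {E : Type u} {k q : ℕ}

lemma sq_integral_le {α : Type*} [MeasurableSpace α] {ν : Measure α} [IsFiniteMeasure ν]
    {f : α → ℝ} (hf : MemLp f 2 ν) : (∫ a, f a ∂ν) ^ 2 ≤ ν.real Set.univ * ∫ a, f a ^ 2 ∂ν := by
  rcases eq_zero_or_neZero ν with rfl | hν
  · simp
  have hpos : 0 < ν.real Set.univ := measureReal_univ_pos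
  have hjensen : (⨍ a, f a ∂ν) ^ 2 ≤ ⨍ a, f a ^ 2 ∂ν :=
    (even_two.convexOn_pow (𝕜 := ℝ)).map_average_le (continuous_pow 2).continuousOn isClosed_univ
      (by simp) (hf.integrable one_le_two) hf.integrable_sq
  rw [average_eq, average_eq, smul_eq_mul, smul_eq_mul, mul_pow, inv_pow, inv_mul_le_iff₀
    (by positivity)] at hjensen
  exact hjensen.trans_eq (by field_simp)

lemma sq_integral_le_of_support_subset {α : Type*} [MeasurableSpace α] {ν : Measure α}
    [IsFiniteMeasure ν] {f : α → ℝ} (hf : MemLp f 2 ν) {D : Set α}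
    (hD : Function.support f ⊆ D) : (∫ a, f a ∂ν) ^ 2 ≤ ν.real D * ∫ a, f a ^ 2 ∂ν := by
  have hzero : ∀ a, a ∉ D → f a = 0 := fun a ha => Function.notMem_support.mp fun h => ha (hD h)
  rw [← setIntegral_eq_integral_of_forall_compl_eq_zero hzero,
    ← setIntegral_eq_integral_of_forall_compl_eq_zero (f := fun a => f a ^ 2) (s := D)
      fun a ha => by simp [hzero a ha], ← measureReal_restrict_apply_univ D]
  exact sq_integral_le (hf.restrict D)

lemma support_fixFirst_subset {A : Set E} {f : (Fin (k + 1) → E) → ℝ}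
    (hs : Function.support f ⊆ Set.univ.pi fun _ => A) (y : E) :
    Function.support (fixFirst y f) ⊆ Set.univ.pi fun _ => A := fun u hu i _ => by
  simpa using hs (a := Fin.cons y u) hu i.succ trivial

variable [MeasurableSpace E]

lemma contraction_self_nonneg (P : Measure E) (q : ℕ) (f : (Fin k → E) → ℝ) :
    0 ≤ contraction P q f f := by
  induction q generalizing k with
  | zero => exact mul_self_nonneg _
  | succ q ih =>
    cases k with
    | zero => simp [contraction]
    | succ k => exact integral_nonneg fun y => ih _

variable {P : Measure E} [IsProbabilityMeasure P]

lemma contraction_self_order {f : (Fin k → E) → ℝ} (hf : BoundedMeasurable f) :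
    contraction P k f f = ∫ u, f u ^ 2 ∂Measure.pi fun _ => P := by
  induction k with
  | zero => simp only [contraction, integral_pi_fin_zero, sq]
  | succ k ih =>
    rw [integral_pi_eq_integral_fixFirst _ (by simpa only [sq] using hf.mul hf)]
    simp only [contraction, ih (hf.fixFirst _)]
    rfl

lemma contraction_self_le (hq : q ≤ k) {f : (Fin k → E) → ℝ} (hf : BoundedMeasurable f)
    {A : Set E} (hs : Function.support f ⊆ Set.univ.pi fun _ => A) :
    contraction P q f f ≤ P.real A ^ (k - q) * ∫ u, f u ^ 2 ∂Measure.pi fun _ => P := by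
  induction q generalizing k with
  | zero =>
    have hle := sq_integral_le_of_support_subset (ν := Measure.pi fun _ => P) (hf.memLp 2 _) hs
    simpa [contraction, measureReal_def, Measure.pi_pi, sq] using hle
  | succ q ih =>
    obtain ⟨k, rfl⟩ := Nat.exists_eq_add_of_le' (Nat.one_le_of_lt hq)
    have hsq : BoundedMeasurable fun u => f u ^ 2 := by simpa only [sq] using hf.mul hf
    rw [integral_pi_eq_integral_fixFirst _ hsq, ← integral_const_mul, Nat.add_sub_add_right]
    refine integral_mono ((BoundedMeasurable.contraction_param q (F := fun y => fixFirst y f)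
      hf.fixFirst_prod (G := fun y => fixFirst y f) hf.fixFirst_prod).integrable P)
      (((hsq.integral_fixFirst _).const_mul _).integrable P) fun y => ?_
    exact ih (Nat.le_of_succ_le_succ hq) (hf.fixFirst y) (support_fixFirst_subset hs y)

lemma contractionCoeff_self_order (c : ℝ) (m k : ℕ) :
    contractionCoeff c m k k k = k.factorial * m.descFactorial k := by
  simp [contractionCoeff, charlier, ← two_mul]

lemma abs_contractionCoeff_self_le {n : ℕ} (hn : 1 ≤ n) (hk : 1 ≤ k) (hq : q ≤ k) :
    |contractionCoeff n n k k q| ≤ n ^ k * k.factorial * (64 ^ k * (k : ℝ) ^ (2 * k)) := by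
  have hkR : (1 : ℝ) ≤ k := by exact_mod_cast hk
  have hfactorial : (q.factorial : ℝ) ≤ k.factorial := by exact_mod_cast Nat.factorial_le hq
  have hchoose : (k.choose q : ℝ) ≤ 2 ^ k := by exact_mod_cast Nat.choose_le_two_pow k q
  have hdesc : (n.descFactorial q : ℝ) ≤ n ^ q := by exact_mod_cast Nat.descFactorial_le_pow n q
  have hcharlier : |charlier n (n - q) (k + k - 2 * q)| ≤ n ^ (k - q) * (4 * k : ℝ) ^ (2 * k) :=
    calc |charlier n (n - q) (k + k - 2 * q)|
        ≤ (2 * (2 * k) * √n) ^ (k + k - 2 * q) :=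
          abs_charlier_sub_le (by exact_mod_cast hn) (Nat.cast_nonneg q) (by linarith) _ (by
            exact_mod_cast (by omega : q + (k + k - 2 * q) ≤ 2 * k))
      _ = n ^ (k - q) * (4 * k : ℝ) ^ (2 * (k - q)) := by
          rw [show k + k - 2 * q = 2 * (k - q) by omega, mul_pow, pow_mul √(n : ℝ),
            Real.sq_sqrt (Nat.cast_nonneg n), ← mul_assoc, mul_comm]
          norm_num
      _ ≤ n ^ (k - q) * (4 * k : ℝ) ^ (2 * k) := by
          gcongr
          · linarith
          · omega
  calc |contractionCoeff n n k k q|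
      = q.factorial * k.choose q * k.choose q * n.descFactorial q
          * |charlier n (n - q) (k + k - 2 * q)| := by
        rw [contractionCoeff, abs_mul, Nat.abs_cast]
        push_cast
        rfl
    _ ≤ k.factorial * 2 ^ k * 2 ^ k * n ^ q * (n ^ (k - q) * (4 * k : ℝ) ^ (2 * k)) := by gcongr
    _ = n ^ k * k.factorial * (64 ^ k * (k : ℝ) ^ (2 * k)) := by
        rw [mul_pow 4, pow_mul 4, show (64 : ℝ) = 2 * 2 * 4 ^ 2 by norm_num, mul_pow, mul_pow,
          ← pow_mul_pow_sub (n : ℝ) hq]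
        ring

lemma sum_abs_contractionCoeff_self_mul_pow_le {n : ℕ} (hn : 1 ≤ n) (hk : 1 ≤ k) {ρ : ℝ}
    (hρ₀ : 0 ≤ ρ) (hρ₁ : ρ ≤ 1) :
    ∑ q ∈ Finset.range k, |contractionCoeff n n k k q| * ρ ^ (k - q)
      ≤ n ^ k * k.factorial * (128 ^ k * (k : ℝ) ^ (2 * k) * ρ) := by
  have hterm : ∀ q ∈ Finset.range k, |contractionCoeff n n k k q| * ρ ^ (k - q)
      ≤ n ^ k * k.factorial * (64 ^ k * (k : ℝ) ^ (2 * k)) * ρ := fun q hq => by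
    have hqk : q < k := Finset.mem_range.mp hq
    gcongr
    · exact abs_contractionCoeff_self_le hn hk hqk.le
    · exact pow_le_of_le_one hρ₀ hρ₁ (Nat.sub_ne_zero_of_lt hqk)
  have hk2 : (k : ℝ) ≤ 2 ^ k := by exact_mod_cast Nat.lt_two_pow_self.le
  calc ∑ q ∈ Finset.range k, |contractionCoeff n n k k q| * ρ ^ (k - q)
      ≤ k * (n ^ k * k.factorial * (64 ^ k * (k : ℝ) ^ (2 * k)) * ρ) := by
        simpa using Finset.sum_le_sum hterm
    _ ≤ 2 ^ k * (n ^ k * k.factorial * (64 ^ k * (k : ℝ) ^ (2 * k)) * ρ) := by gcongr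
    _ = n ^ k * k.factorial * (128 ^ k * (k : ℝ) ^ (2 * k) * ρ) := by
        rw [show (128 : ℝ) = 2 * 64 by norm_num, mul_pow]
        ring

lemma abs_descFactorial_sub_pow_le {n : ℕ} (hn : 1 ≤ n) (hkn : k ≤ n) :
    |(n.descFactorial k : ℝ) - n ^ k| ≤ n ^ k * ((k : ℝ) ^ 2 / n) := by
  have hnR : (0 : ℝ) < n := by exact_mod_cast hn
  have hkR : (k : ℝ) / n ≤ 1 := div_le_one_of_le₀ (by exact_mod_cast hkn) hnR.le
  have hupper : (n.descFactorial k : ℝ) ≤ n ^ k := by exact_mod_cast Nat.descFactorial_le_pow n k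
  have hlower : (n : ℝ) ^ k - n ^ k * ((k : ℝ) ^ 2 / n) ≤ n.descFactorial k :=
    calc (n : ℝ) ^ k - n ^ k * ((k : ℝ) ^ 2 / n)
        = n ^ k * (1 + k * -((k : ℝ) / n)) := by ring
      _ ≤ n ^ k * (1 + -((k : ℝ) / n)) ^ k := by
          gcongr
          exact one_add_mul_le_pow (by linarith) k
      _ = ((n - k : ℕ) : ℝ) ^ k := by
          rw [← mul_pow, Nat.cast_sub hkn]
          field_simp
          ring
      _ ≤ ((n + 1 - k : ℕ) : ℝ) ^ k := by
          gcongr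
          omega
      _ ≤ n.descFactorial k := by exact_mod_cast Nat.pow_sub_le_descFactorial n k
  rw [abs_sub_comm, abs_of_nonneg (sub_nonneg.mpr hupper)]
  linarith

lemma abs_sum_contractionCoeff_mul_contraction_self_le {n : ℕ} (hn : 1 ≤ n) (hk : 1 ≤ k)
    {f : (Fin k → E) → ℝ} (hf : BoundedMeasurable f) {A : Set E}
    (hs : Function.support f ⊆ Set.univ.pi fun _ => A) :
    |∑ q ∈ Finset.range k, contractionCoeff n n k k q * contraction P q f f|
      ≤ n ^ k * k.factorial * (128 ^ k * (k : ℝ) ^ (2 * k) * P.real A)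
        * ∫ u, f u ^ 2 ∂Measure.pi fun _ => P := by
  calc |∑ q ∈ Finset.range k, contractionCoeff n n k k q * contraction P q f f|
      ≤ ∑ q ∈ Finset.range k, |contractionCoeff n n k k q| * contraction P q f f := by
        refine (Finset.abs_sum_le_sum_abs _ _).trans_eq (Finset.sum_congr rfl fun q _ => ?_)
        rw [abs_mul, abs_of_nonneg (contraction_self_nonneg P q f)]
    _ ≤ ∑ q ∈ Finset.range k, |contractionCoeff n n k k q|
          * (P.real A ^ (k - q) * ∫ u, f u ^ 2 ∂Measure.pi fun _ => P) := by
        gcongr with q hq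
        exact contraction_self_le (Finset.mem_range.mp hq).le hf hs
    _ = (∑ q ∈ Finset.range k, |contractionCoeff n n k k q| * P.real A ^ (k - q))
          * ∫ u, f u ^ 2 ∂Measure.pi fun _ => P := by
        simp only [Finset.sum_mul, mul_assoc]
    _ ≤ _ := by
        gcongr
        exact sum_abs_contractionCoeff_self_mul_pow_le hn hk measureReal_nonneg measureReal_le_one

/-- The relative error in the isometry approximation of the second moment, when the integrand is
supported in a set of probability `ρ`. -/
noncomputable def isometryError (n k : ℕ) (ρ : ℝ) : ℝ :=
  128 ^ k * (k : ℝ) ^ (2 * k) * ρ + (k : ℝ) ^ 2 / n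

theorem abs_integral_sq_empiricalIntegral_sub_le {n : ℕ} (hk : 1 ≤ k) (hkn : k ≤ n)
    {f : (Fin k → E) → ℝ} (hf : BoundedMeasurable f) (hfs : IsPermInvariant f) {A : Set E}
    (hs : Function.support f ⊆ Set.univ.pi fun _ => A) :
    |∫ x : Fin n → E, empiricalIntegral P n x Finset.univ f ^ 2 ∂(Measure.pi fun _ => P)
        - n ^ k * k.factorial * ∫ u, f u ^ 2 ∂Measure.pi fun _ => P|
      ≤ n ^ k * k.factorial * (∫ u, f u ^ 2 ∂Measure.pi fun _ => P)
        * isometryError n k (P.real A) := by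
  set Q := ∫ u, f u ^ 2 ∂Measure.pi fun _ => P
  set T := ∑ q ∈ Finset.range k, contractionCoeff n n k k q * contraction P q f f
  have hmoment : ∫ x : Fin n → E, empiricalIntegral P n x Finset.univ f ^ 2
      ∂(Measure.pi fun _ => P) = T + k.factorial * n.descFactorial k * Q := by
    have h := productMoment_eq_sum_contraction (P := P) (c := n) (Finset.univ : Finset (Fin n))
      k.lt_succ_self hf hf hfs hfs
    rw [Finset.sum_range_succ, Finset.card_univ, Fintype.card_fin, contractionCoeff_self_order,
      contraction_self_order hf] at h
    simpa only [productMoment, ← sq] using h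
  have hT := abs_sum_contractionCoeff_mul_contraction_self_le (P := P) (hk.trans hkn) hk hf hs
  calc |_ - n ^ k * k.factorial * Q|
      = |T + k.factorial * Q * ((n.descFactorial k : ℝ) - n ^ k)| := by
        rw [hmoment]
        ring_nf
    _ ≤ |T| + k.factorial * Q * |(n.descFactorial k : ℝ) - n ^ k| := by
        refine (abs_add_le _ _).trans_eq ?_
        rw [abs_mul, abs_of_nonneg (by positivity : 0 ≤ k.factorial * Q)]
    _ ≤ n ^ k * k.factorial * (128 ^ k * (k : ℝ) ^ (2 * k) * P.real A) * Q
          + k.factorial * Q * (n ^ k * ((k : ℝ) ^ 2 / n)) := by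
        gcongr
        exact abs_descFactorial_sub_pow_le (hk.trans hkn) hkn
    _ = n ^ k * k.factorial * Q * isometryError n k (P.real A) := by
        rw [isometryError]
        ring

end SecondMomentBound

section SquareIntegrable

variable {ι E : Type*} {k : ℕ} [MeasurableSpace E] [Fintype ι] {P : Measure E}
  [IsProbabilityMeasure P] {S : Finset ι} {f : (Fin k → E) → ℝ}

lemma ae_integrable_mergeSample (S : Finset ι) (hf : Integrable f (Measure.pi fun _ => P)) :
    ∀ᵐ x : ι → E ∂Measure.pi fun _ => P, ∀ j : Fin k → Option ι, IsPartialInjection S j →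
      Integrable (fun v => f (mergeSample j x v)) (Measure.pi fun _ => P) := by
  refine ae_all_iff.mpr fun j => eventually_imp_distrib_left.mpr fun hj => ?_
  exact ((hj.measurePreserving_mergeSample P).integrable_comp_of_integrable hf).prod_right_ae

lemma ae_mergeSample (S : Finset ι) {p : (Fin k → E) → Prop}
    (hp : ∀ᵐ u ∂Measure.pi fun _ => P, p u) :
    ∀ᵐ x : ι → E ∂Measure.pi fun _ => P, ∀ j : Fin k → Option ι, IsPartialInjection S j →
      ∀ᵐ v ∂Measure.pi fun _ => P, p (mergeSample j x v) := by
  refine ae_all_iff.mpr fun j => eventually_imp_distrib_left.mpr fun hj => ?_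
  exact Measure.ae_ae_of_ae_prod
    ((hj.measurePreserving_mergeSample P).quasiMeasurePreserving.ae hp)

lemma memLp_integral_mergeSample {j : Fin k → Option ι} (hj : IsPartialInjection S j)
    (hf : MemLp f 2 (Measure.pi fun _ => P)) :
    MemLp (fun x : ι → E => ∫ v, f (mergeSample j x v) ∂Measure.pi fun _ => P) 2
      (Measure.pi fun _ => P) := by
  have hmerge := hf.comp_measurePreserving (hj.measurePreserving_mergeSample P)
  have hmeas := hmerge.aestronglyMeasurable.integral_prod_right'
  refine (memLp_two_iff_integrable_sq hmeas).mpr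
    (hmerge.integrable_sq.integral_prod_left.mono' (hmeas.pow 2) ?_)
  filter_upwards [hmerge.aestronglyMeasurable.prodMk_left, hmerge.integrable_sq.prod_right_ae]
    with x hx hx2
  simpa [measureReal_def] using sq_integral_le ((memLp_two_iff_integrable_sq hx).mpr hx2)

lemma memLp_empiricalIntegral (c : ℝ) (S : Finset ι) (hf : MemLp f 2 (Measure.pi fun _ => P)) :
    MemLp (fun x => empiricalIntegral P c x S f) 2 (Measure.pi fun _ => P) := by
  classical
  exact memLp_finsetSum _ fun j hj =>
    (memLp_integral_mergeSample (Finset.mem_filter.mp hj).2 hf).const_mul _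

-- With weight `-|c|` the signs disappear, so the same functional serves as an `L²` dominating
-- function.
lemma ae_abs_empiricalIntegral_le (c : ℝ) (S : Finset ι) {g : ℕ → (Fin k → E) → ℝ}
    (hf : Integrable f (Measure.pi fun _ => P)) (hgf : ∀ N u, |g N u| ≤ |f u|) :
    ∀ᵐ x ∂Measure.pi fun _ => P, ∀ N, |empiricalIntegral P c x S (g N)|
      ≤ empiricalIntegral P (-|c|) x S fun u => |f u| := by
  classical
  filter_upwards [ae_integrable_mergeSample S hf] with x hx N
  refine (Finset.abs_sum_le_sum_abs _ _).trans (Finset.sum_le_sum fun j hj => ?_)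
  rw [abs_mul, abs_slotWeight]
  refine mul_le_mul_of_nonneg_left (abs_integral_le_integral_abs.trans ?_)
    (abs_slotWeight c j ▸ abs_nonneg _)
  exact integral_mono_of_nonneg (ae_of_all _ fun v => abs_nonneg _)
    (hx j (Finset.mem_filter.mp hj).2).abs (ae_of_all _ fun v => hgf N _)

lemma ae_tendsto_empiricalIntegral (c : ℝ) (S : Finset ι) {g : ℕ → (Fin k → E) → ℝ}
    (hf : Integrable f (Measure.pi fun _ => P)) (hg : ∀ N, Measurable (g N))
    (hgf : ∀ N u, |g N u| ≤ |f u|) (hlim : ∀ u, Tendsto (g · u) atTop (𝓝 (f u))) :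
    ∀ᵐ x ∂Measure.pi fun _ => P, Tendsto (fun N => empiricalIntegral P c x S (g N)) atTop
      (𝓝 (empiricalIntegral P c x S f)) := by
  classical
  filter_upwards [ae_integrable_mergeSample S hf] with x hx
  refine tendsto_finsetSum _ fun j hj => Tendsto.const_mul _ ?_
  exact tendsto_integral_of_dominated_convergence (fun v => |f (mergeSample j x v)|)
    (fun N => ((hg N).comp (by fun_prop)).aestronglyMeasurable)
    (hx j (Finset.mem_filter.mp hj).2).abs (fun N => ae_of_all _ fun v => hgf N _)
    (ae_of_all _ fun v => hlim _)

lemma tendsto_integral_sq_of_dominated {α : Type*} [MeasurableSpace α] {ν : Measure α}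
    {g : ℕ → α → ℝ} {f b : α → ℝ} (hg : ∀ N, AEStronglyMeasurable (g N) ν) (hb : MemLp b 2 ν)
    (hgb : ∀ᵐ a ∂ν, ∀ N, |g N a| ≤ b a)
    (hlim : ∀ᵐ a ∂ν, Tendsto (g · a) atTop (𝓝 (f a))) :
    Tendsto (fun N => ∫ a, g N a ^ 2 ∂ν) atTop (𝓝 (∫ a, f a ^ 2 ∂ν)) := by
  refine tendsto_integral_of_dominated_convergence (fun a => b a ^ 2) (fun N => (hg N).pow 2)
    hb.integrable_sq (fun N => ?_) (hlim.mono fun a ha => ha.pow 2)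
  filter_upwards [hgb] with a ha
  rw [norm_pow, Real.norm_eq_abs]
  exact pow_le_pow_left₀ (abs_nonneg _) (ha N) 2

lemma tendsto_integral_sq_empiricalIntegral (c : ℝ) (S : Finset ι) {g : ℕ → (Fin k → E) → ℝ}
    (hf : MemLp f 2 (Measure.pi fun _ => P)) (hg : ∀ N, BoundedMeasurable (g N))
    (hgf : ∀ N u, |g N u| ≤ |f u|) (hlim : ∀ u, Tendsto (g · u) atTop (𝓝 (f u))) :
    Tendsto (fun N => ∫ x, empiricalIntegral P c x S (g N) ^ 2 ∂Measure.pi fun _ => P) atTop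
      (𝓝 (∫ x, empiricalIntegral P c x S f ^ 2 ∂Measure.pi fun _ => P)) :=
  have hint := hf.integrable one_le_two
  tendsto_integral_sq_of_dominated
    (fun N => ((hg N).empiricalIntegral S).1.aestronglyMeasurable)
    (memLp_empiricalIntegral (-|c|) S hf.abs) (ae_abs_empiricalIntegral_le c S hint hgf)
    (ae_tendsto_empiricalIntegral c S hint (fun N => (hg N).1) hgf hlim)

lemma tendsto_truncation {α : Type*} (f : α → ℝ) (a : α) :
    Tendsto (fun N : ℕ => truncation f N a) atTop (𝓝 (f a)) := by
  obtain ⟨M, hM⟩ := exists_nat_gt |f a|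
  refine tendsto_const_nhds.congr' ?_
  filter_upwards [eventually_ge_atTop M] with N hN
  exact (truncation_eq_self (hM.trans_le (by exact_mod_cast hN))).symm

lemma boundedMeasurable_truncation {α : Type*} [MeasurableSpace α] {f : α → ℝ} (hf : Measurable f)
    (A : ℝ) : BoundedMeasurable (truncation f A) :=
  ⟨(measurable_id.indicator measurableSet_Ioc).comp hf, |A|, abs_truncation_le_bound f A⟩

end SquareIntegrable

theorem abs_integral_sq_empiricalIntegral_sub_le_of_memLp {E : Type*} [MeasurableSpace E]
    {P : Measure E} [IsProbabilityMeasure P] {n k : ℕ} (hk : 1 ≤ k) (hkn : k ≤ n)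
    {f : (Fin k → E) → ℝ} (hmeas : Measurable f) (hf : MemLp f 2 (Measure.pi fun _ => P))
    (hfs : IsPermInvariant f) {A : Set E} (hs : Function.support f ⊆ Set.univ.pi fun _ => A) :
    |∫ x : Fin n → E, empiricalIntegral P n x Finset.univ f ^ 2 ∂(Measure.pi fun _ => P)
        - n ^ k * k.factorial * ∫ u, f u ^ 2 ∂Measure.pi fun _ => P|
      ≤ n ^ k * k.factorial * (∫ u, f u ^ 2 ∂Measure.pi fun _ => P)
        * isometryError n k (P.real A) := by
  have hbdd := fun N : ℕ => boundedMeasurable_truncation hmeas N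
  have hle := fun (N : ℕ) u => abs_truncation_le_abs_self f N u
  have hmoment := tendsto_integral_sq_empiricalIntegral (n : ℝ) (Finset.univ : Finset (Fin n)) hf
    hbdd hle (tendsto_truncation f)
  have hnorm := tendsto_integral_sq_of_dominated (fun N => (hbdd N).1.aestronglyMeasurable) hf.abs
    (ae_of_all _ fun u N => hle N u) (ae_of_all _ (tendsto_truncation f))
  refine le_of_tendsto_of_tendsto' ((hmoment.sub (hnorm.const_mul _)).abs)
    ((hnorm.const_mul _).mul_const _) fun N =>
      abs_integral_sq_empiricalIntegral_sub_le hk hkn (hbdd N) (fun σ u => ?_)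
        fun u hu => hs fun hfu => hu ?_
  · simp only [truncation, Function.comp_apply, hfs σ u]
  · simp [truncation, hfu]

section ProductOfMixtures

lemma pi_sum_smul {κ β E : Type*} [Fintype κ] [DecidableEq κ] [Fintype β] [MeasurableSpace E]
    (w : κ → β → ℝ≥0) (ν : β → Measure E) [∀ b, IsFiniteMeasure (ν b)] :
    (Measure.pi fun i => ∑ b, w i b • ν b)
      = ∑ j : κ → β, (∏ i, w i (j i)) • Measure.pi fun i => ν (j i) := by
  refine Measure.pi_eq fun s _ => ?_
  simp only [Measure.coe_finsetSum, Finset.sum_apply, Measure.smul_apply, Measure.pi_pi,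
    Finset.prod_univ_sum, Fintype.piFinset_univ, ENNReal.smul_def, smul_eq_mul,
    ENNReal.ofNNReal_finsetProd, Finset.prod_mul_distrib]

variable {ι E : Type*} {k : ℕ} [MeasurableSpace E]

/-- The law of a slot: the point mass at the sample point `x l` for `some l`, and the sampling law
`P` for `none`. -/
noncomputable def slotLaw (P : Measure E) (x : ι → E) : Option ι → Measure E
  | none => P
  | some l => Measure.dirac (x l)

instance (P : Measure E) [IsProbabilityMeasure P] (x : ι → E) (o : Option ι) :
    IsProbabilityMeasure (slotLaw P x o) := by
  cases o <;> (simp only [slotLaw]; infer_instance)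

/-- The mass of the slot law `o` in the positive (`true`) or negative (`false`) part of
`∑ l, δ_{x l} - n P`. -/
def slotMass (n : ℕ) : Bool → Option ι → ℝ≥0
  | true, o => o.elim 0 fun _ => 1
  | false, o => o.elim n fun _ => 0

lemma mixMeasure_eq_sum_slotMass_smul (P : Measure E) {n : ℕ} (x : Fin n → E) (b : Bool) :
    mixMeasure P n x b = ∑ o, slotMass n b o • slotLaw P x o := by
  cases b <;> simp [mixMeasure, slotMass, slotLaw, Fintype.sum_option]

lemma sum_sign_mul_prod_slotMass {n : ℕ} (j : Fin k → Option ι) :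
    ∑ ε : Fin k → Bool, (-1 : ℝ) ^ (Finset.univ.filter fun i => ε i = false).card
      * ∏ i, (slotMass n (ε i) (j i) : ℝ) = slotWeight n j := by
  have hsign : ∀ ε : Fin k → Bool, (-1 : ℝ) ^ (Finset.univ.filter fun i => ε i = false).card
      = ∏ i, if ε i = false then (-1 : ℝ) else 1 := fun ε => by
    simp [Finset.prod_ite]
  have hdistrib := Finset.prod_univ_sum (fun _ : Fin k => (Finset.univ : Finset Bool))
    fun i b => (if b = false then (-1 : ℝ) else 1) * (slotMass n b (j i) : ℝ)
  rw [Fintype.piFinset_univ] at hdistrib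
  simp only [hsign, ← Finset.prod_mul_distrib, ← hdistrib, slotWeight]
  refine Finset.prod_congr rfl fun i _ => ?_
  cases j i <;> simp [slotMass]

variable {P : Measure E} [IsProbabilityMeasure P]

lemma map_mergeSample_pi {κ : Type*} [Fintype κ] (j : κ → Option ι) (x : ι → E) :
    (Measure.pi fun _ => P).map (mergeSample j x) = Measure.pi fun i => slotLaw P x (j i) := by
  refine (Measure.pi_eq fun s hs => ?_).symm
  have hpre : mergeSample j x ⁻¹' Set.univ.pi s
      = Set.univ.pi fun i => (j i).elim (s i) fun l => {_y : E | x l ∈ s i} := by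
    ext v
    refine forall_congr' fun i => ?_
    cases hi : j i <;> simp [mergeSample, hi]
  rw [Measure.map_apply (by fun_prop) (MeasurableSet.univ_pi hs), hpre, Measure.pi_pi]
  refine Finset.prod_congr rfl fun i _ => ?_
  cases j i with
  | none => rfl
  | some l => by_cases hx : x l ∈ s i <;> simp [slotLaw, Measure.dirac_apply' _ (hs i), hx]

lemma ae_pi_slotLaw [Fintype ι] (S : Finset ι) {p : (Fin k → E) → Prop}
    (hp : ∀ᵐ u ∂Measure.pi fun _ => P, p u) :
    ∀ᵐ x : ι → E ∂Measure.pi fun _ => P, ∀ j : Fin k → Option ι, IsPartialInjection S j →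
      ∀ᵐ u ∂Measure.pi fun i => slotLaw P x (j i), p u := by
  obtain ⟨T, hTp, hT, hT0⟩ := exists_measurable_superset_of_null (ae_iff.mp hp)
  filter_upwards [ae_mergeSample S (measure_eq_zero_iff_ae_notMem.mp hT0)] with x hx j hj
  rw [← map_mergeSample_pi]
  filter_upwards [(ae_map_iff (by fun_prop) hT.compl).mpr (hx j hj)] with u hu
  exact not_not.mp fun h => hu (hTp h)

lemma ae_integrable_pi_slotLaw [Fintype ι] (S : Finset ι) {f : (Fin k → E) → ℝ}
    (hf : Integrable f (Measure.pi fun _ => P)) :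
    ∀ᵐ x : ι → E ∂Measure.pi fun _ => P, ∀ j : Fin k → Option ι, IsPartialInjection S j →
      Integrable f (Measure.pi fun i => slotLaw P x (j i)) := by
  have hmk := hf.aestronglyMeasurable.ae_eq_mk
  filter_upwards [ae_pi_slotLaw S hmk, ae_integrable_mergeSample S (hf.congr hmk)]
    with x hae hint j hj
  refine Integrable.congr ?_ (EventuallyEq.symm (hae j hj))
  rw [← map_mergeSample_pi, integrable_map_measure
    hf.aestronglyMeasurable.stronglyMeasurable_mk.aestronglyMeasurable (by fun_prop)]
  exact hint j hj

lemma integral_pi_slotLaw (x : ι → E) (j : Fin k → Option ι) {f : (Fin k → E) → ℝ}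
    (hf : AEStronglyMeasurable f (Measure.pi fun i => slotLaw P x (j i))) :
    ∫ u, f u ∂(Measure.pi fun i => slotLaw P x (j i))
      = ∫ v, f (mergeSample j x v) ∂Measure.pi fun _ => P := by
  rw [← map_mergeSample_pi] at hf ⊢
  exact integral_map (by fun_prop) hf

lemma ae_pi_slotLaw_not_injective [Fintype ι]
    (hinj : MeasurableSet {u : Fin k → E | Function.Injective u}) (x : ι → E)
    {j : Fin k → Option ι} (hj : ¬ IsPartialInjection Finset.univ j) :
    ∀ᵐ u ∂Measure.pi fun i => slotLaw P x (j i), ¬ Function.Injective u := by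
  rw [← map_mergeSample_pi]
  exact (ae_map_iff (by fun_prop) hinj.compl).mpr
    (ae_of_all _ fun v hv => hj (isPartialInjection_of_injective_mergeSample hv))

end ProductOfMixtures

section EmpInt

variable {E : Type*} {n k : ℕ} [MeasurableSpace E] {P : Measure E} [IsProbabilityMeasure P]
  {f : (Fin k → E) → ℝ}

open Classical in
lemma setIntegral_injective_pi_mixMeasure
    (hinj : MeasurableSet {u : Fin k → E | Function.Injective u}) {x : Fin n → E}
    (hint : ∀ j : Fin k → Option (Fin n), IsPartialInjection Finset.univ j →
      Integrable f (Measure.pi fun i => slotLaw P x (j i)))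
    (hae : ∀ j : Fin k → Option (Fin n), IsPartialInjection Finset.univ j →
      ∀ᵐ u ∂Measure.pi fun i => slotLaw P x (j i), Function.Injective u) (ε : Fin k → Bool) :
    ∫ u in {u | Function.Injective u}, f u ∂(Measure.pi fun i => mixMeasure P n x (ε i))
      = ∑ j : Fin k → Option (Fin n) with IsPartialInjection Finset.univ j,
        (∏ i, (slotMass n (ε i) (j i) : ℝ))
          * ∫ v, f (mergeSample j x v) ∂Measure.pi fun _ => P := by
  have hpos : ∀ j : Fin k → Option (Fin n), IsPartialInjection Finset.univ j →
      {u | Function.Injective u}.indicator f =ᵐ[Measure.pi fun i => slotLaw P x (j i)] f :=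
    fun j hj => (hae j hj).mono fun u hu => Set.indicator_of_mem hu f
  have hneg : ∀ j : Fin k → Option (Fin n), ¬ IsPartialInjection Finset.univ j →
      {u | Function.Injective u}.indicator f =ᵐ[Measure.pi fun i => slotLaw P x (j i)] 0 :=
    fun j hj => (ae_pi_slotLaw_not_injective hinj x hj).mono fun u hu =>
      Set.indicator_of_notMem hu f
  have hindicator : ∀ j : Fin k → Option (Fin n),
      Integrable ({u | Function.Injective u}.indicator f) (Measure.pi fun i => slotLaw P x (j i)) :=
    fun j => by
    by_cases hj : IsPartialInjection Finset.univ j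
    · exact (hint j hj).congr (hpos j hj).symm
    · exact (integrable_zero _ _ _).congr (hneg j hj).symm
  simp only [← integral_indicator hinj, mixMeasure_eq_sum_slotMass_smul]
  rw [pi_sum_smul, integral_finsetSum_measure fun j _ => (hindicator j).smul_measure_nnreal,
    Finset.sum_filter]
  refine Finset.sum_congr rfl fun j _ => ?_
  rw [integral_smul_nnreal_measure, NNReal.smul_def, smul_eq_mul, NNReal.coe_prod]
  split_ifs with hj
  · rw [integral_congr_ae (hpos j hj), integral_pi_slotLaw x j (hint j hj).aestronglyMeasurable]
  · simp [integral_congr_ae (hneg j hj)]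

lemma ae_empInt_eq_empiricalIntegral (a : ℝ)
    (hinj : MeasurableSet {u : Fin k → E | Function.Injective u})
    (hae : ∀ᵐ u : Fin k → E ∂Measure.pi fun _ => P, Function.Injective u)
    (hf : Integrable f (Measure.pi fun _ => P)) :
    ∀ᵐ x : Fin n → E ∂Measure.pi fun _ => P,
      empInt P n a x k f = (√a)⁻¹ ^ k * empiricalIntegral P n x Finset.univ f := by
  classical
  filter_upwards [ae_integrable_pi_slotLaw Finset.univ hf, ae_pi_slotLaw Finset.univ hae]
    with x hx hxae
  rw [empInt]
  congr 1
  simp only [setIntegral_injective_pi_mixMeasure hinj hx hxae, Finset.mul_sum, ← mul_assoc]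
  rw [Finset.sum_comm]
  simp only [← Finset.sum_mul, sum_sign_mul_prod_slotMass, empiricalIntegral]

lemma ae_empiricalIntegral_congr {ι : Type*} [Fintype ι] (c : ℝ) (S : Finset ι)
    {g : (Fin k → E) → ℝ} (h : f =ᵐ[Measure.pi fun _ => P] g) :
    ∀ᵐ x ∂Measure.pi fun _ => P, empiricalIntegral P c x S f = empiricalIntegral P c x S g := by
  classical
  filter_upwards [ae_mergeSample S h] with x hx
  exact Finset.sum_congr rfl fun j hj =>
    congrArg _ (integral_congr_ae (hx j (Finset.mem_filter.mp hj).2))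

end EmpInt

section Symmetrization

variable {ι E : Type*} {k : ℕ}

lemma isPermInvariant_symmetrize (f : (Fin k → E) → ℝ) : IsPermInvariant (symmetrize k f) :=
  fun σ u => congrArg ((k.factorial : ℝ)⁻¹ * ·) <|
    Equiv.sum_comp (Equiv.mulLeft σ) fun τ => f (u ∘ τ)

lemma support_symmetrize_subset {f : (Fin k → E) → ℝ} {A : Set E}
    (hf : Function.support f ⊆ Set.univ.pi fun _ => A) :
    Function.support (symmetrize k f) ⊆ Set.univ.pi fun _ => A := by
  intro u hu
  obtain ⟨σ, -, hσ⟩ := Finset.exists_ne_zero_of_sum_ne_zero (right_ne_zero_of_mul hu)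
  exact fun i _ => by simpa using hf hσ (σ.symm i) (Set.mem_univ _)

lemma mergeSample_comp_perm (j : Fin k → Option ι) (x : ι → E) (v : Fin k → E)
    (σ : Equiv.Perm (Fin k)) : mergeSample j x v ∘ σ = mergeSample (j ∘ σ) x (v ∘ σ) :=
  rfl

lemma IsPartialInjection.comp_injective {S : Finset ι} {j : Fin k → Option ι}
    (hj : IsPartialInjection S j) {σ : Fin k → Fin k} (hσ : Function.Injective σ) :
    IsPartialInjection S (j ∘ σ) :=
  ⟨fun i => hj.1 (σ i), fun _ _ l hi hi' => hσ (hj.2 _ _ l hi hi')⟩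

lemma isPartialInjection_comp_perm {S : Finset ι} {j : Fin k → Option ι} (σ : Equiv.Perm (Fin k)) :
    IsPartialInjection S (j ∘ σ) ↔ IsPartialInjection S j :=
  ⟨fun h => by simpa [Function.comp_assoc] using h.comp_injective σ.symm.injective,
    fun h => h.comp_injective σ.injective⟩

variable [MeasurableSpace E]

lemma measurable_symmetrize {f : (Fin k → E) → ℝ} (hf : Measurable f) :
    Measurable (symmetrize k f) :=
  (Finset.measurable_fun_sum _ fun σ _ => hf.comp (by fun_prop)).const_mul _

lemma measurePreserving_comp_perm (μ : Measure E) [SigmaFinite μ] (σ : Equiv.Perm (Fin k)) :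
    MeasurePreserving (fun v : Fin k → E => v ∘ σ) (Measure.pi fun _ => μ)
      (Measure.pi fun _ => μ) :=
  measurePreserving_arrowCongr' (fun _ => μ) (fun _ => μ) σ.symm (MeasurableEquiv.refl E)
    fun _ => MeasurePreserving.id μ

lemma symmetrize_ae_eq {μ : Measure E} [SigmaFinite μ] {f g : (Fin k → E) → ℝ}
    (h : f =ᵐ[Measure.pi fun _ => μ] g) :
    symmetrize k f =ᵐ[Measure.pi fun _ => μ] symmetrize k g := by
  have hperm : ∀ᵐ u ∂Measure.pi fun _ => μ, ∀ σ : Equiv.Perm (Fin k), f (u ∘ σ) = g (u ∘ σ) :=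
    ae_all_iff.mpr fun σ => (measurePreserving_comp_perm μ σ).quasiMeasurePreserving.ae h
  filter_upwards [hperm] with u hu
  simp only [symmetrize, hu]

lemma memLp_symmetrize {μ : Measure E} [SigmaFinite μ] {p : ℝ≥0∞} {f : (Fin k → E) → ℝ}
    (hf : MemLp f p (Measure.pi fun _ => μ)) :
    MemLp (symmetrize k f) p (Measure.pi fun _ => μ) :=
  (memLp_finsetSum _ fun σ _ =>
    hf.comp_measurePreserving (measurePreserving_comp_perm μ σ)).const_mul _

variable {P : Measure E} [IsProbabilityMeasure P]

lemma integral_mergeSample_comp_perm (j : Fin k → Option ι) (x : ι → E) (f : (Fin k → E) → ℝ)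
    (σ : Equiv.Perm (Fin k)) :
    ∫ v, f (mergeSample j x v ∘ σ) ∂(Measure.pi fun _ => P)
      = ∫ v, f (mergeSample (j ∘ σ) x v) ∂Measure.pi fun _ => P := by
  simp only [mergeSample_comp_perm]
  exact (measurePreserving_comp_perm P σ).integral_comp
    (MeasurableEquiv.arrowCongr' σ.symm (MeasurableEquiv.refl E)).measurableEmbedding
    fun v => f (mergeSample (j ∘ σ) x v)

lemma empiricalIntegral_comp_perm [Fintype ι] (c : ℝ) (x : ι → E) (S : Finset ι)
    (f : (Fin k → E) → ℝ) (σ : Equiv.Perm (Fin k)) :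
    empiricalIntegral P c x S (fun u => f (u ∘ σ)) = empiricalIntegral P c x S f := by
  classical
  refine Finset.sum_equiv (σ.symm.arrowCongr (Equiv.refl (Option ι)))
    (fun j => ?_) fun j _ => ?_
  · simp only [Finset.mem_filter_univ]
    exact (isPartialInjection_comp_perm σ).symm
  · rw [integral_mergeSample_comp_perm]
    exact congrArg (· * _) (Equiv.prod_comp σ fun i => (j i).elim (-c) fun _ => (1 : ℝ)).symm

lemma empiricalIntegral_symmetrize [Fintype ι] (c : ℝ) {x : ι → E} {S : Finset ι}
    {f : (Fin k → E) → ℝ} (hf : ∀ j : Fin k → Option ι, IsPartialInjection S j →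
      Integrable (fun v => f (mergeSample j x v)) (Measure.pi fun _ => P)) :
    empiricalIntegral P c x S (symmetrize k f) = empiricalIntegral P c x S f := by
  classical
  have hperm : ∀ (σ : Equiv.Perm (Fin k)) (j : Fin k → Option ι), IsPartialInjection S j →
      Integrable (fun v => f (mergeSample j x v ∘ σ)) (Measure.pi fun _ => P) := fun σ j hj =>
    (measurePreserving_comp_perm P σ).integrable_comp_of_integrable
      (hf (j ∘ σ) (hj.comp_injective σ.injective))
  have hlinear : empiricalIntegral P c x S (symmetrize k f)
      = (k.factorial : ℝ)⁻¹
        * ∑ σ : Equiv.Perm (Fin k), empiricalIntegral P c x S fun u => f (u ∘ σ) := by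
    simp only [empiricalIntegral]
    rw [Finset.sum_comm, Finset.mul_sum]
    refine Finset.sum_congr rfl fun j hj => ?_
    simp only [symmetrize]
    rw [integral_const_mul,
      integral_finsetSum _ fun σ _ => hperm σ j (Finset.mem_filter.mp hj).2, ← Finset.mul_sum]
    ring
  simp [hlinear, empiricalIntegral_comp_perm, Fintype.card_perm, Nat.factorial_ne_zero]

end Symmetrization

section OffDiagonal

variable {E : Type*} [MeasurableSpace E] {k : ℕ}

lemma measurableSet_injective (hdiag : MeasurableSet {p : E × E | p.1 = p.2}) :
    MeasurableSet {u : Fin k → E | Function.Injective u} := by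
  simp only [Function.Injective, Set.ofPred_forall]
  refine MeasurableSet.iInter fun i => MeasurableSet.iInter fun i' => ?_
  exact (hdiag.preimage (by fun_prop : Measurable fun u : Fin k → E => (u i, u i'))).imp
    (MeasurableSet.const (i = i'))

lemma ae_fst_ne_snd (hdiag : MeasurableSet {p : E × E | p.1 = p.2}) (P : Measure E)
    [SFinite P] [NullSingletonClass P] : ∀ᵐ p : E × E ∂P.prod P, p.1 ≠ p.2 := by
  refine (Measure.ae_prod_iff_ae_ae hdiag.compl).mpr (ae_of_all _ fun y => ?_)
  simp [ae_iff]

lemma ae_injective (hdiag : MeasurableSet {p : E × E | p.1 = p.2}) (P : Measure E)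
    [IsProbabilityMeasure P] [NullSingletonClass P] :
    ∀ᵐ u : Fin k → E ∂Measure.pi fun _ => P, Function.Injective u := by
  have hne : ∀ i i' : Fin k, i ≠ i' → ∀ᵐ u : Fin k → E ∂Measure.pi fun _ => P, u i ≠ u i' := by
    intro i i' hii'
    have hpair : Function.Injective ![i, i'] := by
      simpa [Function.Injective, Fin.forall_fin_two] using ⟨hii', hii'.symm⟩
    exact ((measurePreserving_finTwoArrow P).comp
      (measurePreserving_comp_injective P hpair)).quasiMeasurePreserving.ae (ae_fst_ne_snd hdiag P)
  simp only [← ae_all_iff] at hne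
  filter_upwards [hne] with u hu i i' h
  exact not_imp_not.mp (hu i i') h

end OffDiagonal

section SecondMoment

lemma exists_measurable_ae_eq_of_support_subset {α : Type*} [MeasurableSpace α] {ν : Measure α}
    {f : α → ℝ} (hf : AEMeasurable f ν) {s : Set α} (hs : MeasurableSet s)
    (hsupp : Function.support f ⊆ s) :
    ∃ g : α → ℝ, Measurable g ∧ Function.support g ⊆ s ∧ f =ᵐ[ν] g := by
  refine ⟨s.indicator (hf.mk f), hf.measurable_mk.indicator hs, Set.support_indicator_subset, ?_⟩
  filter_upwards [hf.ae_eq_mk] with a ha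
  by_cases has : a ∈ s
  · rw [Set.indicator_of_mem has, ha]
  · rw [Set.indicator_of_notMem has, Function.notMem_support.mp (mt (@hsupp a) has)]

variable {E Ω : Type*} [MeasurableSpace E] [MeasurableSpace Ω] {n k : ℕ} {h : (Fin k → E) → ℝ}
  {A : Set E}

lemma ae_empInt_eq_empiricalIntegral_symmetrize {P : Measure E} [IsProbabilityMeasure P]
    [NullSingletonClass P] (hdiag : MeasurableSet {p : E × E | p.1 = p.2}) (a : ℝ)
    (hh : Integrable h (Measure.pi fun _ => P)) :
    ∀ᵐ x : Fin n → E ∂Measure.pi fun _ => P,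
      empInt P n a x k h = (√a)⁻¹ ^ k * empiricalIntegral P n x Finset.univ (symmetrize k h) := by
  filter_upwards [ae_empInt_eq_empiricalIntegral a (measurableSet_injective hdiag)
    (ae_injective hdiag P) hh, ae_integrable_mergeSample Finset.univ hh] with x hx hint
  rw [hx, empiricalIntegral_symmetrize _ hint]

lemma aestronglyMeasurable_empInt {P : Measure E} [IsProbabilityMeasure P] [NullSingletonClass P]
    (hdiag : MeasurableSet {p : E × E | p.1 = p.2}) (a : ℝ)
    (hh : MemLp h 2 (Measure.pi fun _ => P)) :
    AEStronglyMeasurable (fun x : Fin n → E => empInt P n a x k h) (Measure.pi fun _ => P) :=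
  ((memLp_empiricalIntegral n Finset.univ hh).1.const_mul _).congr
    (EventuallyEq.symm (ae_empInt_eq_empiricalIntegral a (measurableSet_injective hdiag)
      (ae_injective hdiag P) (hh.integrable one_le_two)))

theorem abs_integral_sq_empInt_sub_le {P : Measure E} [IsProbabilityMeasure P]
    [NullSingletonClass P] (hdiag : MeasurableSet {p : E × E | p.1 = p.2}) {a : ℝ} (ha : 0 ≤ a)
    (hk : 1 ≤ k) (hkn : k ≤ n) (hh : MemLp h 2 (Measure.pi fun _ => P)) (hA : MeasurableSet A)
    (hs : Function.support h ⊆ Set.univ.pi fun _ => A) :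
    |∫ x : Fin n → E, empInt P n a x k h ^ 2 ∂(Measure.pi fun _ => P)
        - (n / a) ^ k * k.factorial * ∫ u, symmetrize k h u ^ 2 ∂Measure.pi fun _ => P|
      ≤ (n / a) ^ k * k.factorial * (∫ u, symmetrize k h u ^ 2 ∂Measure.pi fun _ => P)
        * isometryError n k (P.real A) := by
  obtain ⟨g, hg, hgs, hhg⟩ := exists_measurable_ae_eq_of_support_subset hh.1.aemeasurable
    (MeasurableSet.univ_pi fun _ => hA) hs
  have hsymm := symmetrize_ae_eq hhg
  have hsquare : ∫ u, symmetrize k h u ^ 2 ∂(Measure.pi fun _ => P)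
      = ∫ u, symmetrize k g u ^ 2 ∂Measure.pi fun _ => P :=
    integral_congr_ae (hsymm.fun_comp (· ^ 2))
  have hmoment : ∫ x : Fin n → E, empInt P n a x k h ^ 2 ∂(Measure.pi fun _ => P)
      = (a⁻¹) ^ k * ∫ x : Fin n → E, empiricalIntegral P n x Finset.univ (symmetrize k g) ^ 2
        ∂Measure.pi fun _ => P := by
    rw [← integral_const_mul]
    refine integral_congr_ae ?_
    filter_upwards [ae_empInt_eq_empiricalIntegral_symmetrize hdiag a (hh.integrable one_le_two),
      ae_empiricalIntegral_congr n Finset.univ hsymm] with x hx hxg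
    rw [hx, hxg, mul_pow, pow_right_comm, inv_pow √a, Real.sq_sqrt ha]
  have hbound := abs_integral_sq_empiricalIntegral_sub_le_of_memLp hk hkn (measurable_symmetrize hg)
    (memLp_symmetrize (hh.ae_eq hhg)) (isPermInvariant_symmetrize g) (support_symmetrize_subset hgs)
  rw [hsquare, hmoment, div_eq_inv_mul, mul_pow]
  simp only [mul_assoc] at hbound ⊢
  rw [← mul_sub, abs_mul, abs_of_nonneg (pow_nonneg (inv_nonneg.mpr ha) k)]
  exact mul_le_mul_of_nonneg_left hbound (pow_nonneg (inv_nonneg.mpr ha) k)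

lemma toReal_eLpNorm_two_sq {α : Type*} [MeasurableSpace α] {ν : Measure α} {f : α → ℝ}
    (hf : AEStronglyMeasurable f ν) : (eLpNorm f 2 ν).toReal ^ 2 = ∫ a, f a ^ 2 ∂ν := by
  rw [toReal_eLpNorm hf, lpNorm_eq_integral_norm_rpow_toReal two_ne_zero ENNReal.ofNat_ne_top hf,
    ← Real.rpow_mul_natCast (integral_nonneg fun a => by positivity)]
  simp

lemma integral_comp_iIndepFun {P : Measure E} {Pr : Measure Ω} [IsProbabilityMeasure Pr]
    {X : Fin n → Ω → E} (hX : ∀ j, Measurable (X j)) (hlaw : ∀ j, Pr.map (X j) = P)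
    (hindep : iIndepFun X Pr) {φ : (Fin n → E) → ℝ}
    (hφ : AEStronglyMeasurable φ (Measure.pi fun _ => P)) :
    ∫ ω, φ (fun j => X j ω) ∂Pr = ∫ x, φ x ∂Measure.pi fun _ => P := by
  have hjoint : Pr.map (fun ω j => X j ω) = Measure.pi fun _ => P := by
    simpa only [hlaw] using (iIndepFun_iff_map_fun_eq_pi_map fun j => (hX j).aemeasurable).mp hindep
  rw [← hjoint] at hφ ⊢
  exact (integral_map (by fun_prop) hφ).symm

variable {μ : Measure E} {B : Set E}

section Conditioning

lemma nullSingletonClass_cond [NullSingletonClass μ] : NullSingletonClass μ[|B] :=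
  ⟨fun y => cond_absolutelyContinuous (measure_singleton y)⟩

lemma eq_cond_of_forall_measurableSet {P : Measure E}
    (hP : ∀ s, MeasurableSet s → P s = μ (s ∩ B) / μ B) : P = μ[|B] := by
  ext s hs
  rw [hP s hs, cond_apply' hs, Set.inter_comm, ENNReal.div_eq_inv_mul]

lemma pi_cond_eq_smul_restrict [SigmaFinite μ] :
    (Measure.pi fun _ : Fin k => μ[|B])
      = (μ B)⁻¹ ^ k • (Measure.pi fun _ => μ).restrict (Set.univ.pi fun _ => B) := by
  refine Measure.pi_eq fun s _ => ?_
  simp [Measure.restrict_pi_pi, ProbabilityTheory.cond, Finset.prod_mul_distrib]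

lemma integral_pi_cond [SigmaFinite μ] {f : (Fin k → E) → ℝ}
    (hf : Function.support f ⊆ Set.univ.pi fun _ => B) :
    ∫ u, f u ∂(Measure.pi fun _ => μ[|B])
      = (μ.real B)⁻¹ ^ k * ∫ u, f u ∂Measure.pi fun _ => μ := by
  rw [pi_cond_eq_smul_restrict, integral_smul_measure,
    setIntegral_eq_integral_of_forall_compl_eq_zero
      fun u hu => Function.notMem_support.mp (mt (@hf u) hu)]
  simp [Measure.real]

variable [IsProbabilityMeasure μ[|B]]

lemma measureReal_pos_of_isProbabilityMeasure_cond : 0 < μ.real B := by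
  have hB : μ B ≠ ∞ ∧ μ B ≠ 0 := by
    simpa using mt (cond_eq_zero (μ := μ) (s := B)).mpr (IsProbabilityMeasure.ne_zero _)
  exact ENNReal.toReal_pos hB.2 hB.1

lemma memLp_pi_cond [SigmaFinite μ] {p : ℝ≥0∞} {f : (Fin k → E) → ℝ}
    (hf : MemLp f p (Measure.pi fun _ => μ)) : MemLp f p (Measure.pi fun _ => μ[|B]) := by
  have hB : μ B ≠ 0 :=
    (ENNReal.toReal_pos_iff.mp measureReal_pos_of_isProbabilityMeasure_cond).1.ne'
  rw [pi_cond_eq_smul_restrict]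
  exact (hf.restrict _).smul_measure (ENNReal.pow_ne_top (ENNReal.inv_ne_top.mpr hB))

lemma abs_integral_sq_empInt_cond_sub_le [SigmaFinite μ] [NullSingletonClass μ]
    (hdiag : MeasurableSet {p : E × E | p.1 = p.2}) (hk : 1 ≤ k) (hkn : k ≤ n)
    (hh : MemLp h 2 (Measure.pi fun _ => μ)) (hA : MeasurableSet A) (hAB : A ⊆ B)
    (hs : Function.support h ⊆ Set.univ.pi fun _ => A) :
    |∫ x : Fin n → E, empInt μ[|B] n (n / μ.real B) x k h ^ 2 ∂(Measure.pi fun _ => μ[|B])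
        - k.factorial * ∫ u, symmetrize k h u ^ 2 ∂Measure.pi fun _ => μ|
      ≤ k.factorial * (∫ u, symmetrize k h u ^ 2 ∂Measure.pi fun _ => μ)
        * isometryError n k (μ.real A / μ.real B) := by
  have hB : 0 < μ.real B := measureReal_pos_of_isProbabilityMeasure_cond
  have hn : (n : ℝ) ≠ 0 := Nat.cast_ne_zero.mpr (Nat.one_le_iff_ne_zero.mp (hk.trans hkn))
  have := nullSingletonClass_cond (μ := μ) (B := B)
  have hmass : μ[|B].real A = μ.real A / μ.real B := by
    rw [Measure.real, cond_apply' hA, Set.inter_eq_right.mpr hAB, ENNReal.toReal_mul,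
      ENNReal.toReal_inv, ← div_eq_inv_mul]
    rfl
  have hsupport : Function.support (fun u => symmetrize k h u ^ 2) ⊆ Set.univ.pi fun _ => B := by
    rw [Function.support_pow _ two_ne_zero]
    exact (support_symmetrize_subset hs).trans (Set.pi_mono fun _ _ => hAB)
  have hsquare : (n / (n / μ.real B)) ^ k * k.factorial
        * ∫ u, symmetrize k h u ^ 2 ∂(Measure.pi fun _ => μ[|B])
      = k.factorial * ∫ u, symmetrize k h u ^ 2 ∂Measure.pi fun _ => μ := by
    rw [integral_pi_cond hsupport, div_div_cancel₀ hn, inv_pow]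
    field_simp
  have hbound := abs_integral_sq_empInt_sub_le (P := μ[|B]) hdiag (a := n / μ.real B)
    (by positivity) hk hkn (memLp_pi_cond hh) hA hs
  rwa [hsquare, hmass] at hbound

theorem abs_secondMoment_empInt_sub_le [SigmaFinite μ] [NullSingletonClass μ]
    {Pr : Measure Ω} [IsProbabilityMeasure Pr] {X : Fin n → Ω → E} (hX : ∀ j, Measurable (X j))
    (hlaw : ∀ j, Pr.map (X j) = μ[|B]) (hindep : iIndepFun X Pr)
    (hdiag : MeasurableSet {p : E × E | p.1 = p.2}) (hk : 1 ≤ k) (hkn : k ≤ n)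
    (hh : MemLp h 2 (Measure.pi fun _ => μ)) (hA : MeasurableSet A) (hAB : A ⊆ B)
    (hs : Function.support h ⊆ Set.univ.pi fun _ => A) :
    |∫ ω, empInt μ[|B] n (n / μ.real B) (fun j => X j ω) k h ^ 2 ∂Pr
        - k.factorial * (eLpNorm (symmetrize k h) 2 (Measure.pi fun _ => μ)).toReal ^ 2|
      ≤ k.factorial * (eLpNorm (symmetrize k h) 2 (Measure.pi fun _ => μ)).toReal ^ 2
        * isometryError n k (μ.real A / μ.real B) := by
  have := nullSingletonClass_cond (μ := μ) (B := B)
  have hmeas : AEStronglyMeasurable (fun x : Fin n → E => empInt μ[|B] n (n / μ.real B) x k h ^ 2)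
      (Measure.pi fun _ => μ[|B]) :=
    (aestronglyMeasurable_empInt hdiag _ (memLp_pi_cond hh)).pow 2
  rw [integral_comp_iIndepFun hX hlaw hindep hmeas, toReal_eLpNorm_two_sq (memLp_symmetrize hh).1]
  exact abs_integral_sq_empInt_cond_sub_le hdiag hk hkn hh hA hAB hs

end Conditioning

end SecondMoment

section DiagonalBound

variable {K n k : ℕ}

lemma natCast_sq_le_pow (k : ℕ) : (k : ℝ) ^ 2 ≤ 128 ^ k := by
  have hk : (k : ℝ) ≤ 2 ^ k := by exact_mod_cast Nat.lt_two_pow_self.le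
  calc (k : ℝ) ^ 2 ≤ (2 ^ k) ^ 2 := by gcongr
    _ = (2 ^ 2) ^ k := pow_right_comm _ _ _
    _ ≤ 128 ^ k := by gcongr; norm_num

lemma isometryError_le (hk : 1 ≤ k) (hkK : k ≤ K) (hn : 1 ≤ n) {ρ : ℝ} (hρ0 : 0 ≤ ρ)
    (hρ1 : ρ ≤ 1) :
    isometryError n k ρ ≤ 128 ^ K * ((K : ℝ) ^ (2 * K) * √ρ + √K ^ (3 * K) * (√n)⁻¹) := by
  have hK : (1 : ℝ) ≤ K := by exact_mod_cast hk.trans hkK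
  have hn' : (1 : ℝ) ≤ n := by exact_mod_cast hn
  have hsqrtρ : ρ ≤ √ρ := Real.le_sqrt_self_iff.mpr hρ1
  have hsqrtn : (n : ℝ)⁻¹ ≤ (√n)⁻¹ :=
    inv_anti₀ (by positivity) (Real.sqrt_le_self_iff.mpr (Or.inr hn'))
  have hpow : (k : ℝ) ^ (2 * k) ≤ (K : ℝ) ^ (2 * K) := by
    calc (k : ℝ) ^ (2 * k) ≤ (K : ℝ) ^ (2 * k) := by gcongr
    _ ≤ (K : ℝ) ^ (2 * K) := by gcongr
  calc isometryError n k ρ = 128 ^ k * (k : ℝ) ^ (2 * k) * ρ + (k : ℝ) ^ 2 * (n : ℝ)⁻¹ := rfl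
    _ ≤ 128 ^ K * (K : ℝ) ^ (2 * K) * √ρ + 128 ^ K * (√n)⁻¹ := by
      gcongr
      · norm_num
      · exact (natCast_sq_le_pow k).trans (pow_le_pow_right₀ (by norm_num) hkK)
    _ ≤ 128 ^ K * (K : ℝ) ^ (2 * K) * √ρ + 128 ^ K * (√K ^ (3 * K) * (√n)⁻¹) := by
      gcongr
      exact le_mul_of_one_le_left (by positivity) (one_le_pow₀ (Real.one_le_sqrt.mpr hK))
    _ = _ := by ring

lemma mul_add_le_pow_mul_add (hK : 1 ≤ K) {s M m x y r : ℝ} (hs : 0 ≤ s) (hsM : s ≤ M)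
    (hx : 0 ≤ x) (hy : 0 ≤ y) (hr : 0 ≤ r) (hm : 0 ≤ m) :
    s * (128 ^ K * (x * (m * r) + y)) ≤
      (128 * (1 + M + M * m)) ^ K * x * r + (128 * (1 + M + M * m)) ^ K * y := by
  have hM : 0 ≤ M := hs.trans hsM
  have hMm : 0 ≤ M * m := mul_nonneg hM hm
  have hself : 1 + M + M * m ≤ (1 + M + M * m) ^ K :=
    le_self_pow₀ (by linarith) (Nat.one_le_iff_ne_zero.mp hK)
  calc s * (128 ^ K * (x * (m * r) + y)) ≤ M * (128 ^ K * (x * (m * r) + y)) := by gcongr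
    _ = 128 ^ K * (M * m) * x * r + 128 ^ K * M * y := by ring
    _ ≤ 128 ^ K * (1 + M + M * m) ^ K * x * r + 128 ^ K * (1 + M + M * m) ^ K * y := by
      gcongr <;> linarith
    _ = _ := by rw [mul_pow]

theorem gamma_diag_bound_general {E Ω : Type*} [MeasurableSpace E] [MeasurableSpace Ω]
    (μ : Measure E) [SigmaFinite μ] [NullSingletonClass μ] (Eset : ℕ → Set E)
    (a : ℕ → ℝ) (ha : ∀ n, 1 ≤ n → a n = n / μ.real (Eset n))
    (P : ℕ → Measure E) [∀ n, IsProbabilityMeasure (P n)] (hP : ∀ n, 1 ≤ n → P n = μ[|Eset n])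
    (Pr : Measure Ω) [IsProbabilityMeasure Pr] (X : (n : ℕ) → Fin n → Ω → E)
    (hX : ∀ n j, Measurable (X n j)) (hlaw : ∀ n, 1 ≤ n → ∀ j, Pr.map (X n j) = P n)
    (hindep : ∀ n, iIndepFun (X n) Pr) (hdiag : MeasurableSet {p : E × E | p.1 = p.2})
    (h : (k : ℕ) → (Fin k → E) → ℝ) (hmem : ∀ k, MemLp (h k) 2 (Measure.pi fun _ => μ))
    (hbdd : BddAbove (Set.range fun k : ℕ =>
      k.factorial * (eLpNorm (symmetrize k (h k)) 2 (Measure.pi fun _ => μ)).toReal ^ 2))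
    {A : Set E} (hA : MeasurableSet A) (n0 : ℕ) (hsub : ∀ n, n0 ≤ n → A ⊆ Eset n)
    (hsupp : ∀ k, 1 ≤ k → Function.support (h k) ⊆ Set.univ.pi fun _ => A) :
    ∃ C : ℝ, 0 < C ∧ ∀ K n k : ℕ, n0 ≤ n → K ≤ n → 1 ≤ k → k ≤ K →
      |∫ ω, empInt (P n) n (a n) (fun j => X n j ω) k (h k) ^ 2 ∂Pr
          - k.factorial * (eLpNorm (symmetrize k (h k)) 2 (Measure.pi fun _ => μ)).toReal ^ 2|
        ≤ C ^ K * (K : ℝ) ^ (2 * K) * √(a n / n) + C ^ K * √K ^ (3 * K) * (√n)⁻¹ := by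
  obtain ⟨M, hM⟩ := hbdd
  rw [mem_upperBounds, Set.forall_mem_range] at hM
  have hM0 : 0 ≤ M := le_trans (by positivity) (hM 0)
  refine ⟨128 * (1 + M + M * √(μ.real A)), by positivity, fun K n k hn hKn hk hkK => ?_⟩
  have hn1 : 1 ≤ n := hk.trans (hkK.trans hKn)
  have hPn := hP n hn1
  have : IsProbabilityMeasure μ[|Eset n] := hPn ▸ inferInstance
  have hpos : 0 < μ.real (Eset n) := measureReal_pos_of_isProbabilityMeasure_cond
  have hρ : μ.real A / μ.real (Eset n) ≤ 1 :=
    div_le_one_of_le₀ (measureReal_mono (hsub n hn) (ENNReal.toReal_pos_iff.mp hpos).2.ne) hpos.le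
  have hsqrt : √(μ.real A / μ.real (Eset n)) = √(μ.real A) * √(a n / n) := by
    rw [← Real.sqrt_mul measureReal_nonneg, ha n hn1]
    congr 1
    field_simp
  have hmoment := abs_secondMoment_empInt_sub_le (hX n) (by simpa only [hPn] using hlaw n hn1)
    (hindep n) hdiag hk (hkK.trans hKn) (hmem k) hA (hsub n hn) (hsupp k hk)
  have herror := isometryError_le hk hkK hn1 (by positivity) hρ
  rw [← hPn, ← ha n hn1] at hmoment
  rw [hsqrt] at herror
  calc _ ≤ _ := hmoment
    _ ≤ _ := mul_le_mul_of_nonneg_left herror (by positivity)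
    _ ≤ _ := mul_add_le_pow_mul_add (hk.trans hkK) (by positivity) (hM k) (by positivity)
      (by positivity) (by positivity) (by positivity)
    _ = _ := by rw [mul_assoc _ (√K ^ (3 * K))]

end DiagonalBound

/-- In the Example setup, for `h = (h^{(k)})_k ∈ H` with all `h^{(k)}`
(for `k ≥ 1`) supported in `E_{n₀}^k`, the diagonal second moments
`γ_n(k,k) = 𝔼[(I_k^{(n)}(h^{(k)}))²]` satisfy
`sup_{1 ≤ k ≤ K} |γ_n(k,k) − k! ‖h̃^{(k)}‖²_{L²(μ^k)}| ≤
C^K K^{2K} (a_n/n)^{1/2} + C^K K^{(3/2)K} n^{-1/2}` for every `K ≥ 1` and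
`n ≥ max(n₀, K)`. -/
theorem gamma_diag_bound
    {E Ω : Type*} [MeasurableSpace E] [MeasurableSpace Ω]
    (μ : Measure E) [SigmaFinite μ] [NullSingletonClass μ] (hμ : μ Set.univ = ∞)
    (Eset : ℕ → Set E) (hEmeas : ∀ n, MeasurableSet (Eset n))
    (hEmono : ∀ n : ℕ, 1 ≤ n → Eset n ⊆ Eset (n + 1))
    (hEpos : ∀ n : ℕ, 1 ≤ n → 0 < μ (Eset n))
    (hEfin : ∀ n : ℕ, 1 ≤ n → μ (Eset n) < ∞)
    (hEcover : (⋃ n : ℕ, ⋃ (_ : 1 ≤ n), Eset n) = Set.univ)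
    (hEsmall : Tendsto (fun n : ℕ => (μ (Eset n)).toReal / n) atTop (𝓝 0))
    (a : ℕ → ℝ) (ha : ∀ n : ℕ, 1 ≤ n → a n = (n : ℝ) / (μ (Eset n)).toReal)
    (P : ℕ → Measure E) [∀ n, IsProbabilityMeasure (P n)]
    (hP : ∀ n : ℕ, 1 ≤ n → ∀ B : Set E, MeasurableSet B →
      P n B = μ (B ∩ Eset n) / μ (Eset n))
    (Pr : Measure Ω) [IsProbabilityMeasure Pr]
    (X : (n : ℕ) → Fin n → Ω → E)
    (hXmeas : ∀ n j, Measurable (X n j))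
    (hXlaw : ∀ n : ℕ, 1 ≤ n → ∀ j, Measure.map (X n j) Pr = P n)
    (hXindep : ∀ n : ℕ, iIndepFun (m := fun _ : Fin n => ‹MeasurableSpace E›) (X n) Pr)
    (hdiag : MeasurableSet {p : E × E | p.1 = p.2})
    (h : (k : ℕ) → (Fin k → E) → ℝ)
    (hmem : ∀ k : ℕ, MemLp (h k) 2 (Measure.pi fun _ : Fin k => μ))
    (hH : Summable (fun k : ℕ => (k.factorial : ℝ) *
      ((eLpNorm (symmetrize k (h k)) 2 (Measure.pi fun _ : Fin k => μ)).toReal) ^ 2))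
    (n0 : ℕ) (hn0 : 1 ≤ n0)
    (hsupp : ∀ k : ℕ, 1 ≤ k → ∀ u : Fin k → E, (∃ i, u i ∉ Eset n0) → h k u = 0) :
    ∃ C : ℝ, 0 < C ∧ ∀ K n k : ℕ, 1 ≤ K → n0 ≤ n → K ≤ n →
      1 ≤ k → k ≤ K →
      |(∫ ω, empInt (P n) n (a n) (fun j => X n j ω) k (h k) *
          empInt (P n) n (a n) (fun j => X n j ω) k (h k) ∂Pr) -
        (k.factorial : ℝ) *
          ((eLpNorm (symmetrize k (h k)) 2 (Measure.pi fun _ : Fin k => μ)).toReal) ^ 2| ≤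
        C ^ K * (K : ℝ) ^ (2 * K) * Real.sqrt (a n / n) +
          C ^ K * Real.sqrt K ^ (3 * K) * (Real.sqrt n)⁻¹ := by
  have hsub : ∀ n, n0 ≤ n → Eset n0 ⊆ Eset n := fun n hn =>
    Nat.le_induction subset_rfl (fun m hm ih => ih.trans (hEmono m (hn0.trans hm))) n hn
  obtain ⟨C, hC, hbound⟩ := gamma_diag_bound_general μ Eset a ha P
    (fun n hn => eq_cond_of_forall_measurableSet (hP n hn)) Pr X hXmeas hXlaw hXindep hdiag h hmem
    hH.tendsto_atTop_zero.bddAbove_range (hEmeas n0) n0 hsub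
    fun k hk u hu i _ => not_not.mp fun hi => hu (hsupp k hk u ⟨i, hi⟩)
  exact ⟨C, hC, fun K n k _ hn hKn hk hkK => by
    simpa only [← sq] using hbound K n k hn hKn hk hkK⟩
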